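/- arXiv:2011.05006 — 2 statements merged into one kernel-verified Lean document; each statement's English description precedes it below -/
import Mathlib

section
/- For all real numbers q, z with 0 < q < 1 and z > 0, one has 2·S_even(q,2)·Σ_{ℓ∈ℤ} q^{ℓ(ℓ+1)} z^{2ℓ} = Π_{i≥1} ((1 + q^{i}z)(1 + q^{i−1}z⁻¹))² + Π_{i≥1} ((1 − q^{i}z)(1 − q^{i−1}z⁻¹))², where the sum over ℓ and the infinite products converge absolutely. -/
open scoped BigOperators

/-- `He` is the set of sequences `(ω_{-i})_{i ≥ 1}` of non-negative integers (indexed here by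
`n : ℕ` with `i = n + 1`) with no two consecutive vanishing entries, agreeing for large `i`
with the sequence which is `1` at even `i` and `0` at odd `i`. -/
def He : Set (ℕ → ℕ) :=
  {ω | (∀ n : ℕ, ¬(ω n = 0 ∧ ω (n + 1) = 0)) ∧
       (∃ N : ℕ, ∀ n ≥ N, ω n = if (n + 1) % 2 = 0 then 1 else 0)}

/-- `Ho` is as `He`, but agreeing for large `i` with the sequence which is `1` at odd `i`
and `0` at even `i`. -/
def Ho : Set (ℕ → ℕ) :=
  {ω | (∀ n : ℕ, ¬(ω n = 0 ∧ ω (n + 1) = 0)) ∧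
       (∃ N : ℕ, ∀ n ≥ N, ω n = if (n + 1) % 2 = 1 then 1 else 0)}

/-- `A(ω) = Σ_{i odd} i·ω_{-i} + Σ_{i even} i·(ω_{-i} − 1)`. -/
noncomputable def Afun (ω : ℕ → ℕ) : ℤ :=
  ∑ᶠ n : ℕ, (if (n + 1) % 2 = 1 then ((n : ℤ) + 1) * (ω n : ℤ)
             else ((n : ℤ) + 1) * ((ω n : ℤ) - 1))

/-- `B(ω) = 2·(Σ_{i odd} 1{ω_{-i} ≥ 1} − Σ_{i even} 1{ω_{-i} = 0})`. -/
noncomputable def Bfun (ω : ℕ → ℕ) : ℤ :=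
  2 * ((∑ᶠ n : ℕ, if (n + 1) % 2 = 1 ∧ 1 ≤ ω n then (1 : ℤ) else 0)
     - (∑ᶠ n : ℕ, if (n + 1) % 2 = 0 ∧ ω n = 0 then (1 : ℤ) else 0))

/-- `A'(ω) = Σ_{i even} i·ω_{-i} + Σ_{i odd} i·(ω_{-i} − 1)`. -/
noncomputable def A'fun (ω : ℕ → ℕ) : ℤ :=
  ∑ᶠ n : ℕ, (if (n + 1) % 2 = 0 then ((n : ℤ) + 1) * (ω n : ℤ)
             else ((n : ℤ) + 1) * ((ω n : ℤ) - 1))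

/-- `B'(ω) = 2·(Σ_{i even} 1{ω_{-i} ≥ 1} − Σ_{i odd} 1{ω_{-i} = 0})`. -/
noncomputable def B'fun (ω : ℕ → ℕ) : ℤ :=
  2 * ((∑ᶠ n : ℕ, if (n + 1) % 2 = 0 ∧ 1 ≤ ω n then (1 : ℤ) else 0)
     - (∑ᶠ n : ℕ, if (n + 1) % 2 = 1 ∧ ω n = 0 then (1 : ℤ) else 0))

/-- `S_even(q̃, t) = Σ_{ω ∈ H_e} q̃^{A(ω)} t^{B(ω)}`. -/
noncomputable def Seven (q t : ℝ) : ℝ := ∑' ω : He, q ^ Afun ω.1 * t ^ Bfun ω.1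

/-- `S_odd(q̃, t) = Σ_{ω ∈ H_o} q̃^{A'(ω)} t^{B'(ω)}`. -/
noncomputable def Sodd (q t : ℝ) : ℝ := ∑' ω : Ho, q ^ A'fun ω.1 * t ^ B'fun ω.1

/-!
Consider the sequences of `He` that agree with the ground sequence beyond position `2M`. Peeling off
the last nonzero entry among the first `2M`, together with a zero that may precede it, shows that
their generating function at `t = a + a⁻¹`, multiplied by `q ^ (M (M + 1))`, is the coefficient of
`X ^ (2M)` in `G(X) = ∏ (1 + a q^i X) (1 + a⁻¹ q^i X)`, `i ≥ 1`, since both obey the second-order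
recursion encoded by `G(X) = (1 + t q X + q² X²) G(q X)`. By Euler's expansion of each factor, this
coefficient is `q ^ (M (M + 1))` times a truncation of `∑ q^(k²) a^(2k)`, which as `M → ∞` converges
to `(q; q)_∞⁻²` times the full sum. Hence `(q; q)_∞² S_even(q, a + a⁻¹)` is a theta value, and
`t = 2` is the case `a = 1`.

Jacobi's triple product writes each of the two products as `(q; q)_∞⁻²` times a product
`θ(w) θ(w')` of theta values with nome `√q`, the signs of `w` and `w'` being reversed in the second.
Adding them keeps the index pairs `(n, m)` with `n + m` even; substituting `n = l + k`, `m = l - k`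
there separates the double sum into two theta values with nome `q`.
-/

open Filter Topology

namespace EvenTheta

section QPochhammer

/-- The finite `q`-Pochhammer symbol `(q; q)_n = ∏_{i=1}^n (1 - q^i)`. -/
def qPoch {R : Type*} [CommRing R] (q : R) (n : ℕ) : R := ∏ i ∈ Finset.range n, (1 - q ^ (i + 1))

lemma qPoch_zero {R : Type*} [CommRing R] (q : R) : qPoch q 0 = 1 := Finset.prod_range_zero _

lemma qPoch_succ {R : Type*} [CommRing R] (q : R) (n : ℕ) :
    qPoch q (n + 1) = qPoch q n * (1 - q ^ (n + 1)) := Finset.prod_range_succ _ _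

lemma qPoch_ne_zero {K : Type*} [Field K] {q : K} (hq : ∀ n : ℕ, 1 - q ^ (n + 1) ≠ 0) (n : ℕ) :
    qPoch q n ≠ 0 :=
  Finset.prod_ne_zero_iff.2 fun i _ => hq i

/-- `1 / (q; q)_j` for an integer `j`, read as `0` when `j < 0`. -/
def invQPoch {K : Type*} [Field K] (q : K) (j : ℤ) : K := if 0 ≤ j then (qPoch q j.toNat)⁻¹ else 0

lemma invQPoch_natCast {K : Type*} [Field K] (q : K) (n : ℕ) :
    invQPoch q n = (qPoch q n)⁻¹ := by
  simp [invQPoch]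

lemma invQPoch_of_neg {K : Type*} [Field K] (q : K) {j : ℤ} (hj : j < 0) : invQPoch q j = 0 :=
  if_neg hj.not_ge

lemma invQPoch_sub_one {K : Type*} [Field K] {q : K} (hq : ∀ n : ℕ, 1 - q ^ (n + 1) ≠ 0) (j : ℤ) :
    invQPoch q (j - 1) = (1 - q ^ j) * invQPoch q j := by
  rcases lt_trichotomy j 0 with hj | rfl | hj
  · rw [invQPoch_of_neg q hj, invQPoch_of_neg q (by lia), mul_zero]
  · simp [invQPoch_of_neg]
  · obtain ⟨n, rfl⟩ : ∃ n : ℕ, j = (n + 1 : ℕ) := ⟨(j - 1).toNat, by lia⟩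
    rw [invQPoch_natCast, show ((n + 1 : ℕ) : ℤ) - 1 = n by lia, invQPoch_natCast, qPoch_succ,
      zpow_natCast]
    have := hq n
    field_simp

variable {𝕜 : Type*} [NormedField 𝕜] {q : 𝕜}

/-- The infinite `q`-Pochhammer symbol `(q; q)_∞ = ∏_{i ≥ 1} (1 - q^i)`, meaningful for
`‖q‖ < 1`. -/
noncomputable def qPochInf (q : 𝕜) : 𝕜 := ∏' i : ℕ, (1 - q ^ (i + 1))

lemma one_sub_pow_succ_ne_zero (hq : ‖q‖ < 1) (n : ℕ) : 1 - q ^ (n + 1) ≠ 0 := by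
  refine sub_ne_zero.2 fun h => (pow_lt_one₀ (norm_nonneg q) hq n.succ_ne_zero).ne ?_
  rw [← norm_pow, ← h, norm_one]

lemma summable_norm_pow_succ (hq : ‖q‖ < 1) : Summable fun i : ℕ => ‖q ^ (i + 1)‖ := by
  simpa only [norm_pow] using
    (summable_nat_add_iff 1).2 (summable_geometric_of_lt_one (norm_nonneg q) hq)

variable [CompleteSpace 𝕜]

lemma multipliable_one_sub_pow_succ (hq : ‖q‖ < 1) : Multipliable fun i : ℕ => 1 - q ^ (i + 1) := by
  simpa only [sub_eq_add_neg] using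
    multipliable_one_add_of_summable (by simpa only [norm_neg] using summable_norm_pow_succ hq)

lemma tendsto_qPoch (hq : ‖q‖ < 1) : Tendsto (qPoch q) atTop (𝓝 (qPochInf q)) :=
  (multipliable_one_sub_pow_succ hq).hasProd.tendsto_prod_nat

lemma qPochInf_ne_zero (hq : ‖q‖ < 1) : qPochInf q ≠ 0 := by
  simpa only [qPochInf, sub_eq_add_neg] using tprod_one_add_ne_zero_of_summable
    (fun i => by simpa only [sub_eq_add_neg] using one_sub_pow_succ_ne_zero hq i)
    (by simpa only [norm_neg] using summable_norm_pow_succ hq)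

lemma tendsto_inv_qPoch (hq : ‖q‖ < 1) :
    Tendsto (fun n => (qPoch q n)⁻¹) atTop (𝓝 (qPochInf q)⁻¹) :=
  (tendsto_qPoch hq).inv₀ (qPochInf_ne_zero hq)

lemma tendsto_invQPoch (hq : ‖q‖ < 1) : Tendsto (invQPoch q) atTop (𝓝 (qPochInf q)⁻¹) := by
  have htoNat : Tendsto Int.toNat atTop atTop :=
    tendsto_atTop_atTop.2 fun b => ⟨b, fun j hj => by lia⟩
  refine ((tendsto_inv_qPoch hq).comp htoNat).congr' ?_
  filter_upwards [eventually_ge_atTop 0] with j hj using (if_pos hj).symm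

lemma exists_norm_invQPoch_le (hq : ‖q‖ < 1) : ∃ C, 0 ≤ C ∧ ∀ j, ‖invQPoch q j‖ ≤ C := by
  obtain ⟨C, hC⟩ := (tendsto_inv_qPoch hq).norm.bddAbove_range
  have hC0 : 0 ≤ C := (norm_nonneg _).trans (hC ⟨0, rfl⟩)
  refine ⟨C, hC0, fun j => ?_⟩
  unfold invQPoch
  split_ifs
  · exact hC ⟨_, rfl⟩
  · simpa using hC0

end QPochhammer

section Theta

variable {𝕜 : Type*} [NormedField 𝕜] {q w : 𝕜}

/-- The theta series `∑_{n ∈ ℤ} q^(n²) w^n` in the nome `q`. -/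
noncomputable def theta (q w : 𝕜) : 𝕜 := ∑' n : ℤ, q ^ (n ^ 2) * w ^ n

lemma summable_pow_sq_mul_pow {r ρ : ℝ} (hr0 : 0 ≤ r) (hr1 : r < 1) (hρ : 0 ≤ ρ) :
    Summable fun n : ℕ => r ^ (n ^ 2) * ρ ^ n := by
  have hlim : Tendsto (fun n : ℕ => r ^ n * ρ) atTop (𝓝 0) := by
    simpa using (tendsto_pow_atTop_nhds_zero_of_lt_one hr0 hr1).mul_const ρ
  refine summable_geometric_two.of_norm_bounded_eventually_nat ?_
  filter_upwards [hlim.eventually_le_const one_half_pos] with n hn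
  rw [Real.norm_of_nonneg (by positivity), sq, pow_mul, ← mul_pow]
  exact pow_le_pow_left₀ (by positivity) hn n

lemma summable_norm_theta (hq : ‖q‖ < 1) (w : 𝕜) :
    Summable fun n : ℤ => ‖q ^ (n ^ 2) * w ^ n‖ := by
  refine .of_nat_of_neg
    ((summable_pow_sq_mul_pow (norm_nonneg q) hq (norm_nonneg w)).congr fun n => ?_)
    ((summable_pow_sq_mul_pow (norm_nonneg q) hq (norm_nonneg w⁻¹)).congr fun n => ?_)
  · rw [norm_mul, norm_zpow, norm_zpow, zpow_natCast, ← Nat.cast_pow, zpow_natCast]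
  · rw [norm_mul, norm_zpow, norm_zpow, neg_sq, zpow_neg, zpow_natCast, ← Nat.cast_pow,
      zpow_natCast, norm_inv, inv_pow]

/-- The truncation `∑_{|k| ≤ M} q^(k²) w^k / ((p; p)_{M+k} (p; p)_{M-k})` of the theta series. -/
noncomputable def truncTheta {K : Type*} [Field K] (p q w : K) (M : ℕ) : K :=
  ∑ k ∈ Finset.Icc (-M : ℤ) M,
    invQPoch p (M + k) * invQPoch p (M - k) * (q ^ (k ^ 2) * w ^ k)

lemma hasSum_truncTheta (p q w : 𝕜) (M : ℕ) :
    HasSum (fun k : ℤ => invQPoch p (M + k) * invQPoch p (M - k) * (q ^ (k ^ 2) * w ^ k))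
      (truncTheta p q w M) := by
  refine hasSum_sum_of_ne_finset_zero fun k hk => ?_
  rcases lt_or_ge ((M : ℤ) + k) 0 with h | h
  · rw [invQPoch_of_neg p h, zero_mul, zero_mul]
  · rw [invQPoch_of_neg p (j := M - k) (by rw [Finset.mem_Icc] at hk; lia), mul_zero, zero_mul]

variable [CompleteSpace 𝕜]

/-- Opening the products gives terms `q^(n² + m²) w^n w'^m`. Those with `n + m` odd cancel, and
`n = l + k`, `m = l - k` separates the others because then `n² + m² = 2 l² + 2 k²`. -/
lemma theta_mul_theta_add_theta_neg_mul_theta_neg {w' : 𝕜} (hq0 : q ≠ 0) (hq : ‖q‖ < 1)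
    (hw : w ≠ 0) (hw' : w' ≠ 0) :
    theta q w * theta q w' + theta q (-w) * theta q (-w')
      = 2 * (theta (q ^ 2) (w / w') * theta (q ^ 2) (w * w')) := by
  have hq2 : ‖q ^ 2‖ < 1 := by simpa using pow_lt_one₀ (norm_nonneg q) hq two_ne_zero
  have prod_summable (p u v : 𝕜) (hp : ‖p‖ < 1) :=
    summable_mul_of_summable_norm (summable_norm_theta hp u) (summable_norm_theta hp v)
  have theta_mul (p u v : 𝕜) (hp : ‖p‖ < 1) :=
    tsum_mul_tsum_of_summable_norm (summable_norm_theta hp u) (summable_norm_theta hp v)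
  simp only [theta]
  rw [theta_mul _ _ _ hq, theta_mul _ _ _ hq, theta_mul _ _ _ hq2, ← tsum_mul_left,
    ← (prod_summable _ _ _ hq).tsum_add (prod_summable _ _ _ hq)]
  have hinj : Function.Injective fun x : ℤ × ℤ => (x.2 + x.1, x.2 - x.1) := by
    rintro ⟨a, b⟩ ⟨c, d⟩ h
    simp only [Prod.mk.injEq] at h ⊢
    lia
  rw [← hinj.tsum_eq]
  · refine tsum_congr fun ⟨k, l⟩ => ?_
    have hexp : q ^ ((l + k) ^ 2) * q ^ ((l - k) ^ 2) = (q ^ 2) ^ (k ^ 2) * (q ^ 2) ^ (l ^ 2) := by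
      simp only [← zpow_natCast, ← zpow_add₀ hq0, ← zpow_mul]
      congr 1; push_cast; ring
    have hpow {u v : 𝕜} (hu : u ≠ 0) (hv : v ≠ 0) :
        u ^ (l + k) * v ^ (l - k) = (u / v) ^ k * (u * v) ^ l := by
      rw [zpow_add₀ hu, zpow_sub₀ hv, div_zpow, mul_zpow]
      ring
    have hneg := hpow (neg_ne_zero.2 hw) (neg_ne_zero.2 hw')
    rw [neg_div_neg_eq, neg_mul_neg] at hneg
    linear_combination (w ^ (l + k) * w' ^ (l - k) + (-w) ^ (l + k) * (-w') ^ (l - k)) * hexp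
      + (q ^ 2) ^ (k ^ 2) * (q ^ 2) ^ (l ^ 2) * (hpow hw hw' + hneg)
  · rintro ⟨n, m⟩ hnm
    rcases Int.even_or_odd (n + m) with ⟨l, hl⟩ | hodd
    · exact ⟨(n - l, l), by simp only [Prod.mk.injEq]; lia⟩
    · refine absurd ?_ hnm
      have hsign : (-1 : 𝕜) ^ n * (-1) ^ m = -1 := by
        rw [← zpow_add₀ (neg_ne_zero.2 one_ne_zero), hodd.neg_one_zpow]
      simp only [neg_eq_neg_one_mul w, neg_eq_neg_one_mul w', mul_zpow]
      linear_combination q ^ (n ^ 2) * w ^ n * (q ^ (m ^ 2) * w' ^ m) * hsign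

lemma tendsto_truncTheta {p : 𝕜} (hp : ‖p‖ < 1) (hq : ‖q‖ < 1) (w : 𝕜) :
    Tendsto (truncTheta p q w) atTop (𝓝 ((qPochInf p)⁻¹ ^ 2 * theta q w)) := by
  obtain ⟨C, hC0, hC⟩ := exists_norm_invQPoch_le hp
  rw [theta, ← tsum_mul_left, show truncTheta p q w = _ from
    funext fun M => (hasSum_truncTheta p q w M).tsum_eq.symm]
  refine tendsto_tsum_of_dominated_convergence (bound := fun k => C * C * ‖q ^ (k ^ 2) * w ^ k‖)
    ((summable_norm_theta hq w).mul_left _) (fun k => ?_) (.of_forall fun M k => ?_)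
  · have hadd (j : ℤ) : Tendsto (fun M : ℕ => invQPoch p (M + j)) atTop (𝓝 (qPochInf p)⁻¹) :=
      (tendsto_invQPoch hp).comp (tendsto_atTop_add_const_right _ j tendsto_natCast_atTop_atTop)
    rw [pow_two (qPochInf p)⁻¹]
    exact ((hadd k).mul (hadd (-k))).mul_const _
  · rw [norm_mul, norm_mul]
    gcongr <;> exact hC _

end Theta

section TripleProduct

/-- With `n = i + j`, this is the recursion in `n` by which `∏ (1 + p^m x)` gains one factor at each
of its two ends, after division by `(p; p)_n`. -/
lemma invQPoch_mul_invQPoch_recurrence {K : Type*} [Field K] {p : K} (hp0 : p ≠ 0)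
    (hp : ∀ n : ℕ, 1 - p ^ (n + 1) ≠ 0) (i j : ℤ) :
    (1 - p ^ (i + j + 1)) * (1 - p ^ (i + j + 2)) * (invQPoch p (i + 1) * invQPoch p (j + 1))
      = (1 + p ^ (i + j + 1)) * (invQPoch p i * invQPoch p j)
        + p ^ (j + 1) * (invQPoch p (i - 1) * invQPoch p (j + 1))
        + p ^ (i + 1) * (invQPoch p (i + 1) * invQPoch p (j - 1)) := by
  have invQPoch_eq (j : ℤ) : invQPoch p j = (1 - p ^ (j + 1)) * invQPoch p (j + 1) := by
    simpa using invQPoch_sub_one hp (j + 1)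
  rw [invQPoch_sub_one hp i, invQPoch_sub_one hp j, invQPoch_eq i, invQPoch_eq j,
    show i + j + 2 = (i + 1) + (j + 1) by ring, show i + j + 1 = i + (j + 1) by ring]
  simp only [zpow_add₀ hp0, zpow_one]
  ring

variable {𝕜 : Type*} [NormedField 𝕜] {q w : 𝕜}

lemma truncTheta_term_succ (hq0 : q ≠ 0) (hq : ∀ n : ℕ, 1 - (q ^ 2) ^ (n + 1) ≠ 0) (hw : w ≠ 0)
    (M : ℕ) (k : ℤ) :
    (1 - (q ^ 2) ^ (2 * M + 1)) * (1 - (q ^ 2) ^ (2 * M + 2)) *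
        (invQPoch (q ^ 2) ((M + 1 : ℕ) + k) * invQPoch (q ^ 2) ((M + 1 : ℕ) - k) *
          (q ^ (k ^ 2) * w ^ k))
      = (1 + (q ^ 2) ^ (2 * M + 1)) *
          (invQPoch (q ^ 2) (M + k) * invQPoch (q ^ 2) (M - k) * (q ^ (k ^ 2) * w ^ k))
        + q ^ (2 * M + 1) * w * (invQPoch (q ^ 2) (M + (k - 1)) *
          invQPoch (q ^ 2) (M - (k - 1)) * (q ^ ((k - 1) ^ 2) * w ^ (k - 1)))
        + q ^ (2 * M + 1) * w⁻¹ * (invQPoch (q ^ 2) (M + (k + 1)) *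
          invQPoch (q ^ 2) (M - (k + 1)) * (q ^ ((k + 1) ^ 2) * w ^ (k + 1))) := by
  have hrec := invQPoch_mul_invQPoch_recurrence (pow_ne_zero 2 hq0) hq (M + k) (M - k)
  rw [show (M + k + (M - k) + 1 : ℤ) = (2 * M + 1 : ℕ) by push_cast; ring,
    show (M + k + (M - k) + 2 : ℤ) = (2 * M + 2 : ℕ) by push_cast; ring, zpow_natCast,
    zpow_natCast] at hrec
  have hprev : q ^ (2 * M + 1) * w * (q ^ ((k - 1) ^ 2) * w ^ (k - 1))
      = (q ^ 2) ^ ((M : ℤ) - k + 1) * (q ^ (k ^ 2) * w ^ k) := by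
    rw [mul_mul_mul_comm, ← zpow_one_add₀ hw, add_sub_cancel, ← mul_assoc]
    simp only [← zpow_natCast, ← zpow_mul, ← zpow_add₀ hq0]
    congr 2; push_cast; ring
  have hnext : q ^ (2 * M + 1) * w⁻¹ * (q ^ ((k + 1) ^ 2) * w ^ (k + 1))
      = (q ^ 2) ^ ((M : ℤ) + k + 1) * (q ^ (k ^ 2) * w ^ k) := by
    rw [mul_mul_mul_comm, ← zpow_neg_one, ← zpow_add₀ hw, neg_add_cancel_comm_assoc, ← mul_assoc]
    simp only [← zpow_natCast, ← zpow_mul, ← zpow_add₀ hq0]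
    congr 2; push_cast; ring
  rw [show ((M + 1 : ℕ) + k : ℤ) = M + k + 1 by push_cast; ring,
    show ((M + 1 : ℕ) - k : ℤ) = M - k + 1 by push_cast; ring,
    show (M + (k - 1) : ℤ) = M + k - 1 by ring, show (M - (k - 1) : ℤ) = M - k + 1 by ring,
    show (M + (k + 1) : ℤ) = M + k + 1 by ring, show (M - (k + 1) : ℤ) = M - k - 1 by ring]
  linear_combination (q ^ (k ^ 2) * w ^ k) * hrec
    - invQPoch (q ^ 2) (M + k - 1) * invQPoch (q ^ 2) (M - k + 1) * hprev
    - invQPoch (q ^ 2) (M + k + 1) * invQPoch (q ^ 2) (M - k - 1) * hnext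

lemma truncTheta_succ (hq0 : q ≠ 0) (hq : ∀ n : ℕ, 1 - (q ^ 2) ^ (n + 1) ≠ 0) (hw : w ≠ 0)
    (M : ℕ) :
    (1 - (q ^ 2) ^ (2 * M + 1)) * (1 - (q ^ 2) ^ (2 * M + 2)) * truncTheta (q ^ 2) q w (M + 1)
      = (1 + q ^ (2 * M + 1) * w) * (1 + q ^ (2 * M + 1) * w⁻¹) * truncTheta (q ^ 2) q w M := by
  have hsum := hasSum_truncTheta (q ^ 2) q w M
  have hprev := (Equiv.subRight (1 : ℤ)).hasSum_iff.2 hsum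
  have hnext := (Equiv.addRight (1 : ℤ)).hasSum_iff.2 hsum
  have hsum_succ := (hsum.mul_left (1 + (q ^ 2) ^ (2 * M + 1))).add
    (hprev.mul_left (q ^ (2 * M + 1) * w)) |>.add (hnext.mul_left (q ^ (2 * M + 1) * w⁻¹))
  rw [((hasSum_truncTheta (q ^ 2) q w (M + 1)).mul_left _).unique
    (hsum_succ.congr_fun (truncTheta_term_succ hq0 hq hw M))]
  field_simp
  ring

lemma prod_eq_qPoch_mul_truncTheta (hq0 : q ≠ 0) (hq : ∀ n : ℕ, 1 - (q ^ 2) ^ (n + 1) ≠ 0)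
    (hw : w ≠ 0) (M : ℕ) :
    ∏ i ∈ Finset.range M, ((1 + q ^ (2 * i + 1) * w) * (1 + q ^ (2 * i + 1) * w⁻¹))
      = qPoch (q ^ 2) (2 * M) * truncTheta (q ^ 2) q w M := by
  induction M with
  | zero => simp [qPoch_zero, truncTheta, invQPoch]
  | succ M ih =>
    rw [Finset.prod_range_succ, ih, show 2 * (M + 1) = 2 * M + 1 + 1 by ring, qPoch_succ,
      qPoch_succ]
    linear_combination -(qPoch (q ^ 2) (2 * M)) * truncTheta_succ hq0 hq hw M

theorem hasProd_jacobi_triple [CompleteSpace 𝕜] (hq0 : q ≠ 0) (hq : ‖q‖ < 1) (hw : w ≠ 0) :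
    HasProd (fun i : ℕ => (1 + q ^ (2 * i + 1) * w) * (1 + q ^ (2 * i + 1) * w⁻¹))
      ((qPochInf (q ^ 2))⁻¹ * theta q w) := by
  have hq2 : ‖q ^ 2‖ < 1 := by simpa using pow_lt_one₀ (norm_nonneg q) hq two_ne_zero
  have hfactor (u : 𝕜) : Multipliable fun i : ℕ => 1 + q ^ (2 * i + 1) * u := by
    refine multipliable_one_add_of_summable ?_
    simp only [norm_mul]
    exact ((summable_norm_geometric_of_norm_lt_one hq).comp_injective
      (i := fun i : ℕ => 2 * i + 1) fun i j h => by simpa using h).mul_right _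
  refine ((hfactor w).mul (hfactor w⁻¹)).hasProd_iff_tendsto_nat.2 ?_
  simp only [prod_eq_qPoch_mul_truncTheta hq0 (one_sub_pow_succ_ne_zero hq2) hw]
  have hlim : qPochInf (q ^ 2) * ((qPochInf (q ^ 2))⁻¹ ^ 2 * theta q w)
      = (qPochInf (q ^ 2))⁻¹ * theta q w := by
    have := qPochInf_ne_zero hq2
    field_simp
  rw [← hlim]
  exact ((tendsto_qPoch hq2).comp (tendsto_id.const_mul_atTop' two_pos)).mul
    (tendsto_truncTheta hq2 hq w)

/-- The factor `(1 + q^(i+1) z)(1 + q^i / z)` of the triple product. -/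
def tripleFactor {K : Type*} [Field K] (q z : K) (i : ℕ) : K :=
  (1 + q ^ (i + 1) * z) * (1 + q ^ i * z⁻¹)

lemma hasProd_tripleFactor [CompleteSpace 𝕜] {z : 𝕜} (hq0 : q ≠ 0) (hq : ‖q‖ < 1) (hz : z ≠ 0) :
    HasProd (tripleFactor (q ^ 2) z) ((qPochInf (q ^ 2))⁻¹ * theta q (q * z)) := by
  convert hasProd_jacobi_triple hq0 hq (mul_ne_zero hq0 hz) using 2 with i
  rw [tripleFactor]
  field_simp
  ring

end TripleProduct

section FermionSeries

open PowerSeries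

lemma coeff_one_of_eq_mul_rescale {R : Type*} [CommRing R] {q b d : R} {G : R⟦X⟧}
    (hG : G = (1 + C b * X + C d * X ^ 2) * rescale q G) :
    (1 - q) * coeff 1 G = b * constantCoeff G := by
  have h := congrArg (coeff 1) hG
  simp only [add_mul, one_mul, mul_assoc, map_add, coeff_C_mul, coeff_rescale] at h
  rw [coeff_X_pow_mul', if_neg (by simp), coeff_succ_X_mul 0, coeff_rescale,
    coeff_zero_eq_constantCoeff_apply] at h
  linear_combination h

lemma coeff_add_two_of_eq_mul_rescale {R : Type*} [CommRing R] {q b d : R} {G : R⟦X⟧}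
    (hG : G = (1 + C b * X + C d * X ^ 2) * rescale q G) (n : ℕ) :
    (1 - q ^ (n + 2)) * coeff (n + 2) G
      = b * q ^ (n + 1) * coeff (n + 1) G + d * q ^ n * coeff n G := by
  have h := congrArg (coeff (n + 2)) hG
  simp only [add_mul, one_mul, mul_assoc, map_add, coeff_C_mul, coeff_rescale, coeff_succ_X_mul,
    coeff_X_pow_mul] at h
  linear_combination h

variable {K : Type*} [Field K] {q a : K}

/-- The power series `∏_{i ≥ 1} (1 + a q^i X)`, defined by Euler's expansion
`∑_n q^(n(n+1)/2) a^n X^n / (q; q)_n`. -/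
noncomputable def fermionSeries (q a : K) : K⟦X⟧ :=
  PowerSeries.mk fun n => q ^ (n + 1).choose 2 * a ^ n * (qPoch q n)⁻¹

lemma fermionSeries_eq_mul_rescale (hq : ∀ n : ℕ, 1 - q ^ (n + 1) ≠ 0) (a : K) :
    fermionSeries q a = (1 + C (a * q) * X) * rescale q (fermionSeries q a) := by
  ext n
  rw [add_mul, one_mul, mul_assoc, map_add, coeff_C_mul, coeff_rescale]
  cases n with
  | zero => simp
  | succ n =>
    have := qPoch_ne_zero hq n
    have := hq n
    rw [coeff_succ_X_mul, coeff_rescale, fermionSeries, coeff_mk, coeff_mk, qPoch_succ,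
      Nat.choose_succ_succ' (n + 1), Nat.choose_one_right]
    field_simp
    ring

lemma constantCoeff_fermionSeries (q a : K) : constantCoeff (fermionSeries q a) = 1 := by
  rw [← coeff_zero_eq_constantCoeff_apply, fermionSeries, coeff_mk]
  simp [qPoch]

lemma fermionSeries_mul_inv_eq_mul_rescale (hq : ∀ n : ℕ, 1 - q ^ (n + 1) ≠ 0) (ha : a ≠ 0) :
    fermionSeries q a * fermionSeries q a⁻¹
      = (1 + C ((a + a⁻¹) * q) * X + C (q ^ 2) * X ^ 2) *
        rescale q (fermionSeries q a * fermionSeries q a⁻¹) := by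
  have hconst : (C (a * q) * C (a⁻¹ * q) : K⟦X⟧) = C (q ^ 2) := by
    rw [← map_mul]
    congr 1
    field_simp
  rw [map_mul (rescale q), add_mul a, map_add, ← hconst]
  linear_combination fermionSeries_eq_mul_rescale hq a * fermionSeries q a⁻¹ +
    (1 + C (a * q) * X) * rescale q (fermionSeries q a) * fermionSeries_eq_mul_rescale hq a⁻¹

lemma coeff_fermionSeries_mul_inv (hq0 : q ≠ 0) (ha : a ≠ 0) (M : ℕ) :
    coeff (2 * M) (fermionSeries q a * fermionSeries q a⁻¹)
      = q ^ (M * (M + 1)) * truncTheta q q (a ^ 2) M := by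
  rw [coeff_mul, truncTheta, Finset.mul_sum]
  refine Finset.sum_nbij' (fun x => (x.1 : ℤ) - M) (fun k => ((M + k).toNat, (M - k).toNat))
    ?_ ?_ ?_ ?_ ?_
  · rintro ⟨i, j⟩ hij; simp only [Finset.HasAntidiagonal.mem_antidiagonal, Finset.mem_Icc] at *; lia
  · intro k hk; simp only [Finset.HasAntidiagonal.mem_antidiagonal, Finset.mem_Icc] at *; lia
  · rintro ⟨i, j⟩ hij; simp only [Finset.HasAntidiagonal.mem_antidiagonal, Prod.mk.injEq] at *; lia
  · intro k hk; simp only [Finset.mem_Icc] at *; lia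
  rintro ⟨i, j⟩ hij
  rw [Finset.HasAntidiagonal.mem_antidiagonal] at hij
  have hexp : q ^ (i + 1).choose 2 * q ^ (j + 1).choose 2
      = q ^ (M * (M + 1)) * q ^ (((i : ℤ) - M) ^ 2) := by
    have hi := Nat.add_one_mul_choose_eq i 1
    have hj := Nat.add_one_mul_choose_eq j 1
    simp only [← zpow_natCast, ← zpow_add₀ hq0]
    congr 1
    zify [Nat.choose_one_right] at hi hj hij ⊢
    rw [eq_sub_of_add_eq' hij] at hj
    linarith
  have hpow : a ^ i * a⁻¹ ^ j = (a ^ 2) ^ ((i : ℤ) - M) := by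
    rw [inv_pow, ← div_eq_mul_inv, ← zpow_natCast, ← zpow_natCast, ← zpow_sub₀ ha, ← zpow_natCast,
      ← zpow_mul]
    congr 1
    lia
  rw [fermionSeries, fermionSeries, coeff_mk, coeff_mk, add_sub_cancel,
    show (M - (i - M) : ℤ) = j by lia, invQPoch_natCast, invQPoch_natCast, ← hpow]
  linear_combination a ^ i * a⁻¹ ^ j * (qPoch q i)⁻¹ * (qPoch q j)⁻¹ * hexp

end FermionSeries

section GapSequences

/-- The sequence of `He` that vanishes at odd positions and equals `1` at even ones. -/
def ground (k : ℕ) : ℕ := if (k + 1) % 2 = 0 then 1 else 0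

/-- The sequences that agree with `ground` from index `n` on and in which each zero among the first
`n` entries is followed by a nonzero one, again among the first `n`. -/
def gapSet (n : ℕ) : Set (ℕ → ℕ) :=
  {ω | (∀ k < n, ω k = 0 → k + 1 < n ∧ ω (k + 1) ≠ 0) ∧ ∀ k, n ≤ k → ω k = ground k}

/-- The map on pairs `(ω, m)` that replaces the entry of `ω` with index `n` by `m + 1`. -/
def addOne (n : ℕ) (x : gapSet n × ℕ) : ℕ → ℕ := Function.update x.1.1 n (x.2 + 1)

/-- The map on pairs `(ω, m)` that replaces the entries of `ω` with indices `n` and `n + 1` by `0`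
and `m + 1`. -/
def addTwo (n : ℕ) (x : gapSet n × ℕ) : ℕ → ℕ :=
  Function.update (Function.update x.1.1 n 0) (n + 1) (x.2 + 1)

lemma addOne_injective (n : ℕ) : Function.Injective (addOne n) := by
  rintro ⟨⟨ω, h, hω⟩, m⟩ ⟨⟨ω', h', hω'⟩, m'⟩ heq
  have hentry := congrFun heq
  simp only [addOne, Function.update_apply] at hentry
  exact Prod.ext (Subtype.ext (funext fun k => by grind)) (by simpa using hentry n)

lemma addTwo_injective (n : ℕ) : Function.Injective (addTwo n) := by
  rintro ⟨⟨ω, h, hω⟩, m⟩ ⟨⟨ω', h', hω'⟩, m'⟩ heq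
  have hentry := congrFun heq
  simp only [addTwo, Function.update_apply] at hentry
  exact Prod.ext (Subtype.ext (funext fun k => by grind)) (by simpa using hentry (n + 1))

lemma range_addOne (n : ℕ) :
    Set.range (addOne n) = {ω | ω ∈ gapSet (n + 1) ∧ ∀ k, k + 1 = n → ω k ≠ 0} := by
  ext ω
  constructor
  · rintro ⟨⟨⟨ω, h, hω⟩, m⟩, rfl⟩
    simp only [addOne, gapSet, Set.mem_ofPred_eq, Function.update_apply]
    grind
  · rintro ⟨⟨h, hω⟩, hn⟩
    have hmem : Function.update ω n (ground n) ∈ gapSet n := by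
      simp only [gapSet, Set.mem_ofPred_eq, Function.update_apply]
      grind
    refine ⟨(⟨_, hmem⟩, ω n - 1), ?_⟩
    funext k
    simp only [addOne, Function.update_apply]
    grind

lemma range_addTwo (n : ℕ) : Set.range (addTwo n) = {ω | ω ∈ gapSet (n + 2) ∧ ω n = 0} := by
  ext ω
  constructor
  · rintro ⟨⟨⟨ω, h, hω⟩, m⟩, rfl⟩
    simp only [addTwo, gapSet, Set.mem_ofPred_eq, Function.update_apply]
    grind
  · rintro ⟨⟨h, hω⟩, hn⟩
    have hmem : Function.update (Function.update ω n (ground n)) (n + 1) (ground (n + 1)) ∈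
        gapSet n := by
      simp only [gapSet, Set.mem_ofPred_eq, Function.update_apply]
      grind
    refine ⟨(⟨_, hmem⟩, ω (n + 1) - 1), ?_⟩
    funext k
    simp only [addTwo, Function.update_apply]
    grind

lemma gapSet_zero : gapSet 0 = {ground} := by
  ext ω
  simp [gapSet, funext_iff]

lemma range_addOne_zero : Set.range (addOne 0) = gapSet 1 := by
  rw [range_addOne]
  ext ω
  simp

lemma disjoint_range_addOne_range_addTwo (n : ℕ) :
    Disjoint (Set.range (addOne (n + 1))) (Set.range (addTwo n)) := by
  rw [range_addOne, range_addTwo, Set.disjoint_left]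
  exact fun ω hω hω' => hω.2 n rfl hω'.2

lemma range_addOne_union_range_addTwo (n : ℕ) :
    Set.range (addOne (n + 1)) ∪ Set.range (addTwo n) = gapSet (n + 2) := by
  rw [range_addOne, range_addTwo]
  ext ω
  by_cases h : ω n = 0 <;> simp [h]

/-- The contribution `q^(im) t^(±1)` of an entry `m = ω_{-i}`, `i = k + 1`, to `weight`; the sign is
`-` exactly when `m = 0`. -/
noncomputable def entryWeight (q t : ℝ) (k m : ℕ) : ℝ :=
  (q ^ (k + 1)) ^ m * if m = 0 then t⁻¹ else t

/-- The contribution of the first `n` entries of `ω` to `q^A t^B`, up to a factor independent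
of `ω`. -/
noncomputable def weight (q t : ℝ) (n : ℕ) (ω : ℕ → ℕ) : ℝ :=
  ∏ k ∈ Finset.range n, entryWeight q t k (ω k)

lemma weight_succ_update (q t : ℝ) (n : ℕ) (ω : ℕ → ℕ) (m : ℕ) :
    weight q t (n + 1) (Function.update ω n m) = weight q t n ω * entryWeight q t n m := by
  rw [weight, Finset.prod_range_succ, Function.update_self, weight]
  congr 1
  refine Finset.prod_congr rfl fun k hk => ?_
  rw [Function.update_of_ne (Finset.mem_range.1 hk).ne]

lemma weight_addOne (q t : ℝ) (n : ℕ) (x : gapSet n × ℕ) :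
    weight q t (n + 1) (addOne n x) = weight q t n x.1 * (t * (q ^ (n + 1)) ^ (x.2 + 1)) := by
  rw [addOne, weight_succ_update, entryWeight, if_neg x.2.succ_ne_zero, mul_comm t]

lemma weight_addTwo (q : ℝ) {t : ℝ} (ht : t ≠ 0) (n : ℕ) (x : gapSet n × ℕ) :
    weight q t (n + 2) (addTwo n x) = weight q t n x.1 * (q ^ (n + 2)) ^ (x.2 + 1) := by
  rw [addTwo, weight_succ_update, weight_succ_update, entryWeight, entryWeight, if_pos rfl,
    if_neg x.2.succ_ne_zero]
  field_simp

lemma weight_nonneg {q t : ℝ} (hq : 0 ≤ q) (ht : 0 ≤ t) (n : ℕ) (ω : ℕ → ℕ) :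
    0 ≤ weight q t n ω :=
  Finset.prod_nonneg fun k _ => by unfold entryWeight; positivity

lemma hasSum_weight_zero (q t : ℝ) : HasSum (fun ω : gapSet 0 => weight q t 0 ω) 1 := by
  rw [gapSet_zero]
  simp [weight]

lemma hasSum_pow_succ {x : ℝ} (hx0 : 0 ≤ x) (hx1 : x < 1) :
    HasSum (fun m : ℕ => x ^ (m + 1)) (x / (1 - x)) := by
  simpa [pow_succ', div_eq_mul_inv] using (hasSum_geometric_of_lt_one hx0 hx1).mul_left x

section

variable {q t c : ℝ} {n : ℕ} (hq0 : 0 ≤ q) (hq1 : q < 1)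
include hq0 hq1

lemma hasSum_weight_range_addOne (ht : 0 ≤ t) (h : HasSum (fun ω : gapSet n => weight q t n ω) c) :
    HasSum (fun ω : Set.range (addOne n) => weight q t (n + 1) ω)
      (c * (t * (q ^ (n + 1) / (1 - q ^ (n + 1))))) := by
  rw [(addOne_injective n).hasSum_range_iff]
  have hgeom := (hasSum_pow_succ (pow_nonneg hq0 (n + 1))
    (pow_lt_one₀ hq0 hq1 n.succ_ne_zero)).mul_left t
  have hsummable := h.summable.mul_of_nonneg hgeom.summable
    (fun ω => weight_nonneg hq0 ht n ω) fun m => by positivity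
  exact (h.mul hgeom hsummable).congr_fun fun x => weight_addOne q t n x

lemma hasSum_weight_range_addTwo (ht : 0 < t) (h : HasSum (fun ω : gapSet n => weight q t n ω) c) :
    HasSum (fun ω : Set.range (addTwo n) => weight q t (n + 2) ω)
      (c * (q ^ (n + 2) / (1 - q ^ (n + 2)))) := by
  rw [(addTwo_injective n).hasSum_range_iff]
  have hgeom := hasSum_pow_succ (pow_nonneg hq0 (n + 2)) (pow_lt_one₀ hq0 hq1 (by simp))
  have hsummable := h.summable.mul_of_nonneg hgeom.summable
    (fun ω => weight_nonneg hq0 ht.le n ω) fun m => by positivity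
  exact (h.mul hgeom hsummable).congr_fun fun x => weight_addTwo q ht.ne' n x

open PowerSeries in
/-- Removing the last nonzero entry of a sequence in `gapSet n`, together with a zero that may
precede it, gives the recursion of the coefficients of `G`. -/
lemma hasSum_weight (ht : 0 < t) {G : ℝ⟦X⟧} (hG0 : constantCoeff G = 1)
    (hG : G = (1 + C (t * q) * X + C (q ^ 2) * X ^ 2) * rescale q G) (n : ℕ) :
    HasSum (fun ω : gapSet n => weight q t n ω) (coeff n G) := by
  have hne (n : ℕ) : 1 - q ^ (n + 1) ≠ 0 := (sub_pos.2 (pow_lt_one₀ hq0 hq1 n.succ_ne_zero)).ne'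
  induction n using Nat.twoStepInduction with
  | zero =>
    rw [coeff_zero_eq_constantCoeff_apply, hG0]
    exact hasSum_weight_zero q t
  | one =>
    have hcoeff : coeff 1 G = 1 * (t * (q ^ (0 + 1) / (1 - q ^ (0 + 1)))) := by
      have := hne 0
      field_simp
      linear_combination coeff_one_of_eq_mul_rescale hG + t * q * hG0
    rw [← range_addOne_zero, hcoeff]
    exact hasSum_weight_range_addOne hq0 hq1 ht.le (hasSum_weight_zero q t)
  | more n ih ih_succ =>
    have hcoeff : coeff (n + 2) G = coeff (n + 1) G * (t * (q ^ (n + 2) / (1 - q ^ (n + 2)))) +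
        coeff n G * (q ^ (n + 2) / (1 - q ^ (n + 2))) := by
      have := hne (n + 1)
      field_simp
      linear_combination coeff_add_two_of_eq_mul_rescale hG n
    rw [← range_addOne_union_range_addTwo, hcoeff]
    exact HasSum.add_disjoint (f := weight q t (n + 2)) (disjoint_range_addOne_range_addTwo n)
      (hasSum_weight_range_addOne hq0 hq1 ht.le ih_succ)
      (hasSum_weight_range_addTwo hq0 hq1 ht ih)

end

end GapSequences

section SumOverHe

lemma gapSet_subset_He (M : ℕ) : gapSet (2 * M) ⊆ He := by
  rintro ω ⟨h, hω⟩
  refine ⟨fun n hn => ?_, 2 * M, hω⟩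
  rcases lt_or_ge n (2 * M) with hlt | hge
  · exact (h n hlt hn.1).2 hn.2
  · rw [hω n hge, hω (n + 1) (by lia), ground, ground] at hn
    lia

lemma eventually_mem_gapSet {ω : ℕ → ℕ} (hω : ω ∈ He) :
    ∀ᶠ M : ℕ in atTop, ω ∈ gapSet (2 * M) := by
  obtain ⟨hgap, N, hN⟩ := hω
  filter_upwards [eventually_ge_atTop N] with M hM
  refine ⟨fun k hk hk0 => ⟨?_, fun h => hgap k ⟨hk0, h⟩⟩, fun k hk => hN k (by lia)⟩
  by_contra! hle
  have := hN k (by lia)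
  grind

lemma Afun_eq_sum {M : ℕ} {ω : ℕ → ℕ} (hω : ω ∈ gapSet (2 * M)) :
    Afun ω = ((∑ k ∈ Finset.range (2 * M), (k + 1) * ω k : ℕ) : ℤ) - (M * (M + 1) : ℕ) := by
  rw [Afun, finsum_eq_sum_of_support_subset (s := Finset.range (2 * M))]
  · clear hω
    induction M with
    | zero => simp
    | succ M ih =>
      rw [show 2 * (M + 1) = 2 * M + 1 + 1 by ring]
      simp only [Finset.sum_range_succ, ih]
      rw [if_pos (by lia), if_neg (by lia)]
      push_cast
      ring
  · refine Function.support_subset_iff'.2 fun n hn => ?_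
    have := hω.2 n (by simpa using hn)
    rw [ground] at this
    split_ifs with h <;> simp [this] <;> lia

lemma Bfun_eq_sum {M : ℕ} {ω : ℕ → ℕ} (hω : ω ∈ gapSet (2 * M)) :
    Bfun ω = ∑ k ∈ Finset.range (2 * M), if ω k = 0 then -1 else 1 := by
  rw [Bfun, finsum_eq_sum_of_support_subset (s := Finset.range (2 * M)),
    finsum_eq_sum_of_support_subset (s := Finset.range (2 * M))]
  · clear hω
    induction M with
    | zero => simp
    | succ M ih =>
      rw [show 2 * (M + 1) = 2 * M + 1 + 1 by ring]
      simp only [Finset.sum_range_succ, ← ih]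
      grind
  all_goals
    refine Function.support_subset_iff'.2 fun n hn => ?_
    have := hω.2 n (by simpa using hn)
    rw [ground] at this
    split_ifs <;> lia

lemma weight_eq_pow_mul_zpow (q : ℝ) {t : ℝ} (ht : t ≠ 0) (n : ℕ) (ω : ℕ → ℕ) :
    weight q t n ω = q ^ (∑ k ∈ Finset.range n, (k + 1) * ω k) *
      t ^ (∑ k ∈ Finset.range n, if ω k = 0 then -1 else 1 : ℤ) := by
  induction n with
  | zero => simp [weight]
  | succ n ih =>
    rw [weight, Finset.prod_range_succ, ← weight, ih, Finset.sum_range_succ, Finset.sum_range_succ,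
      pow_add, zpow_add₀ ht, entryWeight, ← pow_mul]
    split_ifs <;> simp <;> ring

lemma pow_Afun_mul_pow_Bfun {q t : ℝ} (hq : q ≠ 0) (ht : t ≠ 0) {M : ℕ} {ω : ℕ → ℕ}
    (hω : ω ∈ gapSet (2 * M)) :
    q ^ Afun ω * t ^ Bfun ω = (q ^ (M * (M + 1)))⁻¹ * weight q t (2 * M) ω := by
  rw [Afun_eq_sum hω, Bfun_eq_sum hω, weight_eq_pow_mul_zpow q ht, zpow_sub₀ hq, zpow_natCast,
    zpow_natCast]
  ring

lemma hasSum_of_tendsto_of_eventually_mem {ι κ : Type*} {l : Filter κ} [l.NeBot] {f : ι → ℝ}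
    (hf : ∀ x, 0 ≤ f x) {S : Set ι} {s : κ → Set ι} (hsub : ∀ m, s m ⊆ S)
    (hmem : ∀ x ∈ S, ∀ᶠ m in l, x ∈ s m) {c : κ → ℝ} {L : ℝ}
    (hc : ∀ m, HasSum (fun x : s m => f x) (c m)) (hlim : Tendsto c l (𝓝 L)) :
    HasSum (fun x : S => f x) L := by
  have hc' (m : κ) : HasSum ((s m).indicator f) (c m) := hasSum_subtype_iff_indicator.1 (hc m)
  have hle (m : κ) (F : Finset ι) :
      ∑ x ∈ F, (s m).indicator f x ≤ ∑ x ∈ F, S.indicator f x :=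
    Finset.sum_le_sum fun x _ => Set.indicator_le_indicator_of_subset (hsub m) hf x
  refine hasSum_subtype_iff_indicator.2 (hasSum_of_isLUB_of_nonneg _
    (fun x => Set.indicator_nonneg (fun y _ => hf y) x) ⟨?_, fun b hb => ?_⟩)
  · rintro _ ⟨F, rfl⟩
    have hF : ∀ᶠ m in l, ∀ x ∈ F, x ∈ S → x ∈ s m :=
      (eventually_all_finset F).2 fun x _ => eventually_imp_distrib_left.2 (hmem x)
    refine ge_of_tendsto hlim ?_
    filter_upwards [hF] with m hm
    refine le_trans (Finset.sum_le_sum fun x hx => ?_)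
      (sum_le_hasSum F (fun x _ => Set.indicator_nonneg (fun y _ => hf y) x) (hc' m))
    by_cases hxS : x ∈ S
    · rw [Set.indicator_of_mem hxS, Set.indicator_of_mem (hm x hx hxS)]
    · rw [Set.indicator_of_notMem hxS]
      exact Set.indicator_nonneg (fun y _ => hf y) x
  · exact le_of_tendsto' hlim fun m =>
      hasSum_le_of_sum_le (hc' m) fun F => (hle m F).trans (hb ⟨F, rfl⟩)

section

variable {q a : ℝ} (hq0 : 0 < q) (hq1 : q < 1) (ha : 0 < a)
include hq0 hq1 ha

lemma hasSum_gapSet_add_inv (M : ℕ) :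
    HasSum (fun ω : gapSet (2 * M) => q ^ Afun ω * (a + a⁻¹) ^ Bfun ω)
      (truncTheta q q (a ^ 2) M) := by
  have hq : ‖q‖ < 1 := by rwa [Real.norm_of_nonneg hq0.le]
  have ht : 0 < a + a⁻¹ := by positivity
  have hG0 : PowerSeries.constantCoeff (fermionSeries q a * fermionSeries q a⁻¹) = 1 := by
    rw [map_mul, constantCoeff_fermionSeries, constantCoeff_fermionSeries, one_mul]
  have hG := fermionSeries_mul_inv_eq_mul_rescale (one_sub_pow_succ_ne_zero hq) ha.ne'
  have hweight := (hasSum_weight hq0.le hq1 ht hG0 hG (2 * M)).mul_left (q ^ (M * (M + 1)))⁻¹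
  rw [coeff_fermionSeries_mul_inv hq0.ne' ha.ne', inv_mul_cancel_left₀ (pow_ne_zero _ hq0.ne')]
    at hweight
  exact hweight.congr_fun fun ω => pow_Afun_mul_pow_Bfun hq0.ne' ht.ne' ω.2

lemma Seven_add_inv : Seven q (a + a⁻¹) = (qPochInf q)⁻¹ ^ 2 * theta q (a ^ 2) := by
  have hq : ‖q‖ < 1 := by rwa [Real.norm_of_nonneg hq0.le]
  have hlim := tendsto_truncTheta hq hq (a ^ 2)
  have hsum := hasSum_of_tendsto_of_eventually_mem
    (f := fun ω => q ^ Afun ω * (a + a⁻¹) ^ Bfun ω) (fun ω => by positivity) gapSet_subset_He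
    (fun ω => eventually_mem_gapSet) (hasSum_gapSet_add_inv hq0 hq1 ha) hlim
  rw [Seven, hsum.tsum_eq]

end

end SumOverHe

section ProductFormula

variable {𝕜 : Type*} [NormedField 𝕜] [CompleteSpace 𝕜] {q z z' : 𝕜}

lemma hasProd_tripleFactor_mul (hq0 : q ≠ 0) (hq : ‖q‖ < 1) (hz : z ≠ 0) (hz' : z' ≠ 0) :
    HasProd (fun i => tripleFactor (q ^ 2) z i * tripleFactor (q ^ 2) z' i)
      ((qPochInf (q ^ 2))⁻¹ ^ 2 * (theta q (q * z) * theta q (q * z'))) := by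
  convert (hasProd_tripleFactor hq0 hq hz).mul (hasProd_tripleFactor hq0 hq hz') using 1
  ring

lemma tprod_tripleFactor_mul_add_tprod_tripleFactor_neg_mul (hq0 : q ≠ 0) (hq : ‖q‖ < 1)
    (hz : z ≠ 0) (hz' : z' ≠ 0) :
    ∏' i, tripleFactor (q ^ 2) z i * tripleFactor (q ^ 2) z' i +
        ∏' i, tripleFactor (q ^ 2) (-z) i * tripleFactor (q ^ 2) (-z') i =
      2 * ((qPochInf (q ^ 2))⁻¹ ^ 2 * theta (q ^ 2) (z / z')) *
        theta (q ^ 2) (q ^ 2 * (z * z')) := by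
  have hθ := theta_mul_theta_add_theta_neg_mul_theta_neg hq0 hq (mul_ne_zero hq0 hz)
    (mul_ne_zero hq0 hz')
  rw [mul_div_mul_left _ _ hq0, mul_mul_mul_comm, ← sq] at hθ
  rw [(hasProd_tripleFactor_mul hq0 hq hz hz').tprod_eq,
    (hasProd_tripleFactor_mul hq0 hq (neg_ne_zero.2 hz) (neg_ne_zero.2 hz')).tprod_eq,
    mul_neg, mul_neg]
  linear_combination (qPochInf (q ^ 2))⁻¹ ^ 2 * hθ

lemma theta_summand_mul_sq {K : Type*} [Field K] {q : K} (hq0 : q ≠ 0) (z : K) :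
    (fun ℓ : ℤ => q ^ (ℓ ^ 2) * (q * z ^ 2) ^ ℓ) =
      fun ℓ : ℤ => q ^ (ℓ * (ℓ + 1)) * z ^ (2 * ℓ) := by
  funext ℓ
  rw [mul_zpow, ← mul_assoc, ← zpow_add₀ hq0, zpow_mul z, zpow_two, ← sq, mul_add_one, ← sq]

lemma theta_mul_sq {𝕜 : Type*} [NormedField 𝕜] {q : 𝕜} (hq0 : q ≠ 0) (z : 𝕜) :
    theta q (q * z ^ 2) = ∑' ℓ : ℤ, q ^ (ℓ * (ℓ + 1)) * z ^ (2 * ℓ) := by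
  rw [theta, theta_summand_mul_sq hq0]

lemma summable_zpow_mul_zpow (hq0 : q ≠ 0) (hq : ‖q‖ < 1) (z : 𝕜) :
    Summable fun ℓ : ℤ => q ^ (ℓ * (ℓ + 1)) * z ^ (2 * ℓ) := by
  rw [← theta_summand_mul_sq hq0]
  exact (summable_norm_theta hq _).of_norm

end ProductFormula

section Coercion

variable {𝕜 : Type*} [RCLike 𝕜] {q : ℝ}

lemma ofReal_theta (q w : ℝ) : ((theta q w : ℝ) : 𝕜) = theta (q : 𝕜) w := by
  rw [theta, theta, RCLike.ofReal_tsum]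
  push_cast
  rfl

lemma ofReal_qPochInf (hq : ‖q‖ < 1) : ((qPochInf q : ℝ) : 𝕜) = qPochInf (q : 𝕜) := by
  rw [qPochInf, qPochInf, ← RCLike.ofRealAm_coe, (multipliable_one_sub_pow_succ hq).map_tprod
    (RCLike.ofRealAm : ℝ →ₐ[ℝ] 𝕜) RCLike.continuous_ofReal]
  simp only [map_sub, map_one, map_pow]

lemma ofReal_Seven_add_inv (𝕜 : Type*) [RCLike 𝕜] {a : ℝ} (hq0 : 0 < q) (hq1 : q < 1)
    (ha : 0 < a) :
    ((Seven q (a + a⁻¹) : ℝ) : 𝕜) = (qPochInf (q : 𝕜))⁻¹ ^ 2 * theta (q : 𝕜) (a ^ 2) := by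
  have hq : ‖q‖ < 1 := by rwa [Real.norm_of_nonneg hq0.le]
  rw [Seven_add_inv hq0 hq1 ha, RCLike.ofReal_mul, RCLike.ofReal_pow, RCLike.ofReal_inv,
    ofReal_qPochInf hq, ofReal_theta, RCLike.ofReal_pow]

end Coercion

end EvenTheta

open EvenTheta

theorem statement7_general {𝕜 : Type*} [RCLike 𝕜] {q a : ℝ} {z : 𝕜} (hq0 : 0 < q) (hq1 : q < 1)
    (ha : 0 < a) (hz : z ≠ 0) :
    Summable (fun ℓ : ℤ => (q : 𝕜) ^ (ℓ * (ℓ + 1)) * z ^ (2 * ℓ)) ∧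
    Multipliable (fun i => tripleFactor (q : 𝕜) (a * z) i * tripleFactor (q : 𝕜) (z / a) i) ∧
    Multipliable (fun i => tripleFactor (q : 𝕜) (-(a * z)) i * tripleFactor (q : 𝕜) (-(z / a)) i) ∧
    2 * ((Seven q (a + a⁻¹) : ℝ) : 𝕜) * (∑' ℓ : ℤ, (q : 𝕜) ^ (ℓ * (ℓ + 1)) * z ^ (2 * ℓ)) =
      (∏' i, tripleFactor (q : 𝕜) (a * z) i * tripleFactor (q : 𝕜) (z / a) i) +
      (∏' i, tripleFactor (q : 𝕜) (-(a * z)) i * tripleFactor (q : 𝕜) (-(z / a)) i) := by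
  rw [ofReal_Seven_add_inv 𝕜 hq0 hq1 ha]
  obtain ⟨s, hs0, rfl⟩ : ∃ s : ℝ, 0 < s ∧ s ^ 2 = q :=
    ⟨√q, Real.sqrt_pos.2 hq0, Real.sq_sqrt hq0.le⟩
  have hs : ‖(s : 𝕜)‖ < 1 := by
    rw [RCLike.norm_of_nonneg hs0.le]
    exact (sq_lt_one_iff₀ hs0.le).1 hq1
  have hs_ne : (s : 𝕜) ≠ 0 := RCLike.ofReal_ne_zero.2 hs0.ne'
  have ha_ne : (a : 𝕜) ≠ 0 := RCLike.ofReal_ne_zero.2 ha.ne'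
  have haz : a * z ≠ 0 := mul_ne_zero ha_ne hz
  have hza : z / a ≠ 0 := div_ne_zero hz ha_ne
  have hratio : a * z / (z / a) = (a ^ 2 : 𝕜) := by field_simp
  have hprod : a * z * (z / a) = z ^ 2 := by field_simp
  have hsum := tprod_tripleFactor_mul_add_tprod_tripleFactor_neg_mul hs_ne hs haz hza
  rw [hratio, hprod, theta_mul_sq (pow_ne_zero 2 hs_ne)] at hsum
  rw [RCLike.ofReal_pow]
  refine ⟨summable_zpow_mul_zpow (pow_ne_zero 2 hs_ne) (by simpa using hs) z, ?_, ?_, hsum.symm⟩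
  · exact (hasProd_tripleFactor_mul hs_ne hs haz hza).multipliable
  · exact (hasProd_tripleFactor_mul hs_ne hs (neg_ne_zero.2 haz) (neg_ne_zero.2 hza)).multipliable

theorem statement7 (q z : ℝ) (hq0 : 0 < q) (hq1 : q < 1) (hz : 0 < z) :
    Summable (fun ℓ : ℤ => q ^ (ℓ * (ℓ + 1)) * z ^ (2 * ℓ)) ∧
    Multipliable (fun i : ℕ => ((1 + q ^ (i + 1) * z) * (1 + q ^ i * z⁻¹)) ^ 2) ∧
    Multipliable (fun i : ℕ => ((1 - q ^ (i + 1) * z) * (1 - q ^ i * z⁻¹)) ^ 2) ∧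
    2 * Seven q 2 * (∑' ℓ : ℤ, q ^ (ℓ * (ℓ + 1)) * z ^ (2 * ℓ)) =
      (∏' i : ℕ, ((1 + q ^ (i + 1) * z) * (1 + q ^ i * z⁻¹)) ^ 2) +
      (∏' i : ℕ, ((1 - q ^ (i + 1) * z) * (1 - q ^ i * z⁻¹)) ^ 2) := by
  simpa [tripleFactor, sq, one_add_one_eq_two, ← sub_eq_add_neg] using
    statement7_general (𝕜 := ℝ) hq0 hq1 one_pos hz.ne'
end

section
/- For all real numbers q, z with 0 < q < 1 and z > 0, one has 4·S_odd(q,2)·Σ_{ℓ∈ℤ} q^{(ℓ+1)²} z^{2ℓ+1} = Π_{i≥1} ((1 + q^{i}z)(1 + q^{i−1}z⁻¹))² − Π_{i≥1} ((1 − q^{i}z)(1 − q^{i−1}z⁻¹))², where the sum over ℓ and the infinite products converge absolutely. -/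
open scoped BigOperators

/-! The product `G(x) = ∏_{i ≥ 0} (1 + t q^i x + q^(2i) x²)` satisfies
`G(x) = (1 + t x + x²) G(q x)`, which amounts to a three-term recurrence for its power series
coefficients `c_n`. Summing the weights of the sequences in `Ho` entry by entry, and recording only
whether the last entry vanishes, leads to the same recurrence, so that
`t · Sodd q t = lim_k q^(-k²) c_(2k+1)`.

On the other hand `q^(N(N+1)) z^(2N) G(q^(-N) z⁻¹)` is the double product with its factors in `z`
restricted to `i < N`, and its Laurent coefficient of odd degree `2ℓ + 1` is
`q^((ℓ+1)²) · q^(-m²) c_(2m+1)` with `m = N - 1 - ℓ`. As `N → ∞`, dominated convergence identifies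
the odd part of the double product with `t · Sodd q t · ∑_ℓ q^((ℓ+1)²) z^(2ℓ+1)`. For `t = 2` the
factors `1 + t x + x²` are squares. -/

open Filter Topology

section General

open Function Set

lemma one_sub_pow_ne_zero {𝕜 : Type*} [NormedDivisionRing 𝕜] {q : 𝕜} (hq : ‖q‖ < 1) {n : ℕ}
    (hn : n ≠ 0) : 1 - q ^ n ≠ 0 := by
  intro h
  have := pow_lt_one₀ (norm_nonneg q) hq hn
  rw [← norm_pow, ← sub_eq_zero.1 h, norm_one] at this
  exact this.false

lemma tendsto_mul_pow_mul {R : Type*} [SeminormedRing R] {q : R} (hq : ‖q‖ < 1) (a b : R) :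
    Tendsto (fun n : ℕ => a * q ^ n * b) atTop (𝓝 0) := by
  simpa using ((tendsto_pow_atTop_nhds_zero_of_norm_lt_one hq).const_mul a).mul_const b

/-- The auxiliary sequence `‖u n‖ + 2 ‖u (n + 1)‖` eventually contracts by the factor `3/4`, which
`‖u n‖` itself need not do. -/
lemma summable_norm_of_recurrence {R : Type*} [SeminormedRing R] {u a b : ℕ → R}
    (ha : Tendsto a atTop (𝓝 0)) (hb : Tendsto b atTop (𝓝 0))
    (hu : ∀ n, u (n + 2) = a n * u (n + 1) + b n * u n) : Summable fun n => ‖u n‖ := by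
  have hsmall {c : ℕ → R} (hc : Tendsto c atTop (𝓝 0)) : ∀ᶠ n in atTop, ‖c n‖ ≤ 1 / 4 := by
    simpa using hc.norm.eventually_le_const (show ‖(0 : R)‖ < 1 / 4 by simp)
  have hsum : Summable fun n => ‖u n‖ + 2 * ‖u (n + 1)‖ := by
    refine summable_of_ratio_norm_eventually_le (r := 3 / 4) (by norm_num) ?_
    filter_upwards [hsmall ha, hsmall hb] with n han hbn
    have hn : ‖u (n + 2)‖ ≤ 1 / 4 * ‖u (n + 1)‖ + 1 / 4 * ‖u n‖ := by
      rw [hu]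
      refine (norm_add_le _ _).trans (add_le_add ?_ ?_) <;>
        exact (norm_mul_le _ _).trans (by gcongr)
    rw [Real.norm_of_nonneg (by positivity), Real.norm_of_nonneg (by positivity)]
    change ‖u (n + 1)‖ + 2 * ‖u (n + 2)‖ ≤ _
    linarith [norm_nonneg (u n)]
  exact hsum.of_nonneg_of_le (fun n => norm_nonneg _) fun n => by linarith [norm_nonneg (u (n + 1))]

lemma hasSum_odd_part {R : Type*} [Ring R] [TopologicalSpace R] [IsTopologicalAddGroup R]
    {a : ℕ → R} {x f g : R} (hf : HasSum (fun n => a n * x ^ n) f)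
    (hg : HasSum (fun n => a n * (-x) ^ n) g) :
    HasSum (fun m => 2 * (a (2 * m + 1) * x ^ (2 * m + 1))) (f - g) := by
  have hinj : Function.Injective fun m : ℕ => 2 * m + 1 := fun a b h => by simpa using h
  have h := (hinj.hasSum_iff fun n hn => ?_).2 (hf.sub hg)
  · refine h.congr_fun fun m => ?_
    simp only [Function.comp, (odd_two_mul_add_one m).neg_pow]
    rw [mul_neg, sub_neg_eq_add, two_mul (a _ * _)]
  · have hn : Even n := by
      rw [← Nat.not_odd_iff_even]
      rintro ⟨m, rfl⟩
      exact hn ⟨m, rfl⟩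
    rw [hn.neg_pow, sub_self]

lemma tendsto_tsum_mul_sub {R : Type*} [NormedRing R] [CompleteSpace R] {b : ℕ → R} {S : R}
    (hb : Tendsto b atTop (𝓝 S)) {θ : ℤ → R} (hθ : Summable fun ℓ => ‖θ ℓ‖) :
    Tendsto (fun K : ℕ => ∑' m : ℕ, b m * θ (K - m)) atTop (𝓝 (S * ∑' ℓ, θ ℓ)) := by
  obtain ⟨C, hC⟩ := hb.norm.bddAbove_range
  replace hC (m : ℕ) : ‖b m‖ ≤ C := hC ⟨m, rfl⟩
  let f (K : ℕ) (ℓ : ℤ) : R := if ℓ ≤ K then b (K - ℓ).toNat * θ ℓ else 0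
  have hreindex (K : ℕ) : ∑' m : ℕ, b m * θ (K - m) = ∑' ℓ, f K ℓ := by
    have hinj : Function.Injective fun m : ℕ => (K : ℤ) - m := fun m n h => by simpa using h
    rw [← hinj.tsum_eq fun ℓ hℓ => ?_]
    · simp [f]
    · have hle : ℓ ≤ K := by
        by_contra h
        exact hℓ (if_neg h)
      exact ⟨(K - ℓ).toNat, by simp only; omega⟩
  simp_rw [hreindex, ← hθ.of_norm.tsum_mul_left]
  refine tendsto_tsum_of_dominated_convergence (hθ.mul_left C) (fun ℓ => ?_)
    (Eventually.of_forall fun K ℓ => ?_)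
  · have hindex : Tendsto (fun K : ℕ => ((K : ℤ) - ℓ).toNat) atTop atTop :=
      tendsto_atTop.2 fun m => by
        filter_upwards [eventually_ge_atTop (m + ℓ.toNat)] with K hK
        omega
    refine ((hb.comp hindex).mul_const (θ ℓ)).congr' ?_
    filter_upwards [eventually_ge_atTop ℓ.toNat] with K hK
    exact (if_pos (by omega)).symm
  · by_cases h : ℓ ≤ K
    · simp only [f, if_pos h]
      exact (norm_mul_le _ _).trans (by gcongr; exact hC _)
    · have hC0 : 0 ≤ C := (norm_nonneg _).trans (hC 0)
      simp only [f, if_neg h, norm_zero]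
      positivity

lemma hasSum_mul_of_nonneg {ι κ : Type*} {f : ι → ℝ} {g : κ → ℝ} {a b : ℝ} (hf : HasSum f a)
    (hg : HasSum g b) (hf₀ : 0 ≤ f) (hg₀ : 0 ≤ g) :
    HasSum (fun p : ι × κ => f p.1 * g p.2) (a * b) :=
  hf.mul hg (hf.summable.mul_of_nonneg hg.summable hf₀ hg₀)

lemma tendsto_tsum_iUnion_of_monotone {α : Type*} {f : α → ℝ} (hf : 0 ≤ f) {s : ℕ → Set α}
    (hs : Monotone s) {b : ℕ → ℝ} (hb : ∀ k, HasSum (fun x : s k => f x) (b k))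
    (hbdd : BddAbove (range b)) : Tendsto b atTop (𝓝 (∑' x : ⋃ k, s k, f x)) := by
  obtain ⟨C, hC⟩ := hbdd
  have hind (k : ℕ) : HasSum ((s k).indicator f) (b k) := hasSum_subtype_iff_indicator.1 (hb k)
  have hlim (x : α) : Tendsto (fun k => (s k).indicator f x) atTop
      (𝓝 ((⋃ k, s k).indicator f x)) :=
    (hs.tendsto_indicator s f x).mono_right (pure_le_nhds _)
  have hnonneg (u : Set α) (x : α) : 0 ≤ u.indicator f x := indicator_nonneg (fun y _ => hf y) x
  have hsum : Summable ((⋃ k, s k).indicator f) := summable_of_sum_le (hnonneg _) fun u =>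
    le_of_tendsto' (tendsto_finsetSum u fun x _ => hlim x) fun k =>
      (sum_le_hasSum u (fun x _ => hnonneg _ x) (hind k)).trans (hC ⟨k, rfl⟩)
  have h := tendsto_tsum_of_dominated_convergence hsum hlim (Eventually.of_forall fun k x => ?_)
  · rw [tsum_subtype]
    exact h.congr fun k => (hind k).tsum_eq
  · rw [Real.norm_of_nonneg (hnonneg _ x)]
    exact indicator_le_indicator_of_subset (subset_iUnion s k) hf x

lemma hasSum_Ioi_zero_iff {M : Type*} [AddCommMonoid M] [TopologicalSpace M] {f : ℕ → M} {a : M} :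
    HasSum (fun k : Ioi 0 => f k) a ↔ HasSum (fun k => f (k + 1)) a := by
  have h := Nat.succ_injective.hasSum_range_iff (f := f) (a := a)
  rwa [Nat.range_succ] at h

lemma finsum_update {ι α M : Type*} [DecidableEq ι] [AddCommMonoid M] (f : ι → α → M)
    {g ω : ι → α} (hf : ∀ i, f i (g i) = 0) (hω : {i | ω i ≠ g i}.Finite) {n : ι}
    (hn : ω n = g n) (k : α) :
    ∑ᶠ i, f i (update ω n k i) = ∑ᶠ i, f i (ω i) + f n k := by
  have hsplit (i : ι) : f i (update ω n k i) = f i (ω i) + (Pi.single n (f n k) : ι → M) i := by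
    rcases eq_or_ne i n with rfl | hi
    · simp [hn, hf]
    · simp [hi]
  have hsupport : support (fun i => f i (ω i)) ⊆ {i | ω i ≠ g i} := fun i hi h =>
    hi (by simp only [h, hf])
  have hsingle : support (Pi.single n (f n k) : ι → M) ⊆ {n} := Pi.support_single_subset
  rw [finsum_congr hsplit, finsum_add_distrib (hω.subset hsupport)
    ((finite_singleton n).subset hsingle), finsum_eq_single (Pi.single n (f n k) : ι → M) n
    fun i hi => Pi.single_eq_of_ne hi _, Pi.single_eq_same]

end General

/-! ### Power series and product -/

section Field

variable {K L : Type*} [Field K] [Field L]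

/-- The generating polynomial `1 + t x + x²` of a site that holds at most two particles, where a
single particle has weight `t` and a pair has weight `1`. -/
def siteFactor (t x : K) : K := 1 + t * x + x ^ 2

lemma sq_mul_siteFactor_inv (t : K) {x : K} (hx : x ≠ 0) :
    x ^ 2 * siteFactor t x⁻¹ = siteFactor t x := by
  unfold siteFactor
  field_simp
  ring

/-- The coefficients `c_n` of `G(x) = ∏_{i ≥ 0} (1 + t q^i x + q^(2i) x²)`, defined by the
recurrence that the functional equation `G(x) = (1 + t x + x²) G(q x)` imposes. -/
def quadCoeff (q t : K) : ℕ → K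
  | 0 => 1
  | 1 => t / (1 - q)
  | n + 2 => (t * q ^ (n + 1) * quadCoeff q t (n + 1) + q ^ n * quadCoeff q t n) / (1 - q ^ (n + 2))

/-- The normalized odd coefficients `q^(-k²) c_(2k+1)`. They are, up to the factor `t`, both the
partial sums of `Sodd q t` and the odd Laurent coefficients of `truncatedProduct`. -/
def oddCoeff (q t : K) (k : ℕ) : K := q⁻¹ ^ k ^ 2 * quadCoeff q t (2 * k + 1)

lemma map_quadCoeff (f : K →+* L) (q t : K) (n : ℕ) :
    f (quadCoeff q t n) = quadCoeff (f q) (f t) n := by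
  induction n using Nat.twoStepInduction with
  | zero => simp [quadCoeff]
  | one => simp [quadCoeff]
  | more n ih₀ ih₁ => simp [quadCoeff, ih₀, ih₁]

lemma map_oddCoeff (f : K →+* L) (q t : K) (k : ℕ) :
    f (oddCoeff q t k) = oddCoeff (f q) (f t) k := by
  simp [oddCoeff, map_quadCoeff]

/-- The term `q^((ℓ+1)²) z^(2ℓ+1)` of the theta series. -/
def thetaTerm (q z : K) (ℓ : ℤ) : K := q ^ ((ℓ + 1) ^ 2) * z ^ (2 * ℓ + 1)

/-- Here `M² + M - (2m+1)M = (ℓ+1)² - m²` and `2M - (2m+1) = 2ℓ + 1` with `M = N + 1`,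
`ℓ = N - m`. -/
lemma truncated_odd_term {q : K} (hq0 : q ≠ 0) (t : K) {z : K} (hz : z ≠ 0) (N m : ℕ) :
    q ^ ((N + 1) * (N + 1 + 1)) * z ^ (2 * (N + 1))
        * (quadCoeff q t (2 * m + 1) * (q⁻¹ ^ (N + 1) * z⁻¹) ^ (2 * m + 1))
      = oddCoeff q t m * thetaTerm q z (N - m) := by
  have hqpow : q ^ (((N : ℤ) - m + 1) ^ 2) * q ^ ((N + 1) * (2 * m + 1))
      = q ^ ((N + 1) * (N + 1 + 1)) * q ^ m ^ 2 := by
    simp only [← zpow_natCast, ← zpow_add₀ hq0]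
    push_cast
    ring_nf
  have hzpow : z ^ (2 * ((N : ℤ) - m) + 1) * z ^ (2 * m + 1) = z ^ (2 * (N + 1)) := by
    simp only [← zpow_natCast, ← zpow_add₀ hz]
    push_cast
    ring_nf
  unfold oddCoeff thetaTerm
  rw [← hzpow, mul_pow, inv_pow, inv_pow, inv_pow, inv_pow, ← pow_mul]
  field_simp
  linear_combination -quadCoeff q t (2 * m + 1) * hqpow

/-- The `i`-th factor of the double product; for `t = 2` it is
`((1 + q^(i+1) z) (1 + q^i z⁻¹))²`. -/
def doubleFactor (q t z : K) (i : ℕ) : K :=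
  siteFactor t (q ^ (i + 1) * z) * siteFactor t (q ^ i * z⁻¹)

lemma doubleFactor_two (q z : K) (i : ℕ) :
    doubleFactor q 2 z i = ((1 + q ^ (i + 1) * z) * (1 + q ^ i * z⁻¹)) ^ 2 := by
  unfold doubleFactor siteFactor
  ring

end Field

section Normed

variable {𝕜 : Type*} [NormedField 𝕜]

lemma quadCoeff_one {q : 𝕜} (hq : ‖q‖ < 1) (t : 𝕜) : (1 - q) * quadCoeff q t 1 = t := by
  have := one_sub_pow_ne_zero hq one_ne_zero
  rw [pow_one] at this
  rw [quadCoeff, mul_div_cancel₀ _ this]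

lemma quadCoeff_add_two {q : 𝕜} (hq : ‖q‖ < 1) (t : 𝕜) (n : ℕ) :
    (1 - q ^ (n + 2)) * quadCoeff q t (n + 2)
      = t * q ^ (n + 1) * quadCoeff q t (n + 1) + q ^ n * quadCoeff q t n := by
  rw [quadCoeff, mul_div_cancel₀ _ (one_sub_pow_ne_zero hq (by omega))]

lemma summable_norm_quadCoeff_mul_pow {q : 𝕜} (hq : ‖q‖ < 1) (t x : 𝕜) :
    Summable fun n => ‖quadCoeff q t n * x ^ n‖ := by
  have hinv : Tendsto (fun n : ℕ => (1 - q ^ (n + 2))⁻¹) atTop (𝓝 1) := by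
    have := ((tendsto_pow_atTop_nhds_zero_of_norm_lt_one hq).comp (tendsto_add_atTop_nat 2))
    simpa using (this.const_sub 1).inv₀ (by simp)
  refine summable_norm_of_recurrence
    (a := fun n => t * q ^ n * (q * x) * (1 - q ^ (n + 2))⁻¹)
    (b := fun n => 1 * q ^ n * x ^ 2 * (1 - q ^ (n + 2))⁻¹) ?_ ?_ fun n => ?_
  · simpa using (tendsto_mul_pow_mul hq t (q * x)).mul hinv
  · simpa using (tendsto_mul_pow_mul hq 1 (x ^ 2)).mul hinv
  · rw [quadCoeff]
    ring

lemma summable_norm_pow_sq_mul_pow {q : 𝕜} (hq : ‖q‖ < 1) (w : 𝕜) :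
    Summable fun n : ℕ => ‖q ^ n ^ 2 * w ^ n‖ := by
  have hsq : ‖q ^ 2‖ < 1 := by
    rw [norm_pow]
    exact pow_lt_one₀ (norm_nonneg q) hq two_ne_zero
  refine summable_norm_of_recurrence (b := fun _ => 0) (tendsto_mul_pow_mul hsq (q ^ 3) w)
    tendsto_const_nhds fun n => ?_
  ring

lemma summable_norm_thetaTerm {q : 𝕜} (hq : ‖q‖ < 1) {z : 𝕜} (hz : z ≠ 0) :
    Summable fun ℓ => ‖thetaTerm q z ℓ‖ := by
  have hnonneg (n : ℕ) :
      thetaTerm q z n = q ^ (n + 1) ^ 2 * (z ^ 2) ^ (n + 1) * z⁻¹ := by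
    have hq_exp : ((n : ℤ) + 1) ^ 2 = (((n + 1) ^ 2 : ℕ) : ℤ) := by push_cast; ring
    have hz_exp : 2 * (n : ℤ) + 1 = ((2 * (n + 1) : ℕ) : ℤ) - 1 := by push_cast; ring
    rw [thetaTerm, hq_exp, hz_exp, zpow_sub_one₀ hz, zpow_natCast, zpow_natCast, pow_mul, mul_assoc]
  have hneg (n : ℕ) : thetaTerm q z (-(n + 1)) = q ^ n ^ 2 * ((z ^ 2)⁻¹) ^ n * z⁻¹ := by
    have hq_exp : (-((n : ℤ) + 1) + 1) ^ 2 = ((n ^ 2 : ℕ) : ℤ) := by push_cast; ring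
    have hz_exp : 2 * -((n : ℤ) + 1) + 1 = -((2 * n : ℕ) : ℤ) - 1 := by push_cast; ring
    rw [thetaTerm, hq_exp, hz_exp, zpow_sub_one₀ hz, zpow_neg, zpow_natCast, zpow_natCast, pow_mul,
      inv_pow, mul_assoc]
  refine Summable.of_nat_of_neg_add_one ?_ ?_
  · simp only [hnonneg, norm_mul _ z⁻¹]
    exact ((summable_nat_add_iff 1).2 (summable_norm_pow_sq_mul_pow hq (z ^ 2))).mul_right _
  · simp only [hneg, norm_mul _ z⁻¹]
    exact (summable_norm_pow_sq_mul_pow hq (z ^ 2)⁻¹).mul_right _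

/-- The power series `G(x) = ∑ c_n x^n`. -/
noncomputable def quadSeries (q t x : 𝕜) : 𝕜 := ∑' n, quadCoeff q t n * x ^ n

/-- The double product with the factors in `z` restricted to `i < N`; by `quadSeries_eq_tprod` the
first term is the product of all the factors in `z⁻¹`. -/
noncomputable def truncatedProduct (q t z : 𝕜) (N : ℕ) : 𝕜 :=
  quadSeries q t z⁻¹ * ∏ i ∈ Finset.range N, siteFactor t (q ^ (i + 1) * z)

variable [CompleteSpace 𝕜] {q : 𝕜}

lemma hasSum_quadSeries (hq : ‖q‖ < 1) (t x : 𝕜) :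
    HasSum (fun n => quadCoeff q t n * x ^ n) (quadSeries q t x) :=
  (summable_norm_quadCoeff_mul_pow hq t x).of_norm.hasSum

lemma quadSeries_eq_siteFactor_mul (hq : ‖q‖ < 1) (t x : 𝕜) :
    quadSeries q t x = siteFactor t x * quadSeries q t (q * x) := by
  have hx := hasSum_quadSeries hq t x
  have hqx := hasSum_quadSeries hq t (q * x)
  have hdiff := (hasSum_nat_add_iff' 2).2 (hx.sub hqx)
  have hlin := ((hasSum_nat_add_iff' 1).2 hqx).mul_left (t * x)
  have hquad := hqx.mul_left (x ^ 2)
  have heq := hdiff.unique ((hlin.add hquad).congr_fun fun n => ?_)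
  · simp only [Finset.sum_range_succ, Finset.sum_range_zero, quadCoeff.eq_1, pow_zero, pow_one,
      zero_add] at heq
    unfold siteFactor
    linear_combination heq + x * quadCoeff_one hq t
  · simp only [mul_pow]
    linear_combination x ^ (n + 2) * quadCoeff_add_two hq t n

lemma quadSeries_eq_prod_mul (hq : ‖q‖ < 1) (t x : 𝕜) (n : ℕ) :
    quadSeries q t x
      = (∏ i ∈ Finset.range n, siteFactor t (q ^ i * x)) * quadSeries q t (q ^ n * x) := by
  induction n with
  | zero => simp
  | succ n ih =>
    rw [ih, Finset.prod_range_succ, quadSeries_eq_siteFactor_mul hq t (q ^ n * x), pow_succ']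
    ring_nf

lemma tendsto_quadSeries_pow_mul (hq : ‖q‖ < 1) (t x : 𝕜) :
    Tendsto (fun n : ℕ => quadSeries q t (q ^ n * x)) atTop (𝓝 1) := by
  have hterm (m : ℕ) : Tendsto (fun n : ℕ => quadCoeff q t m * (q ^ n * x) ^ m) atTop
      (𝓝 (quadCoeff q t m * 0 ^ m)) := by
    have h := tendsto_mul_pow_mul hq 1 x
    simp only [one_mul] at h
    exact (h.pow m).const_mul _
  have h := tendsto_tsum_of_dominated_convergence (summable_norm_quadCoeff_mul_pow hq t x) hterm
    (Eventually.of_forall fun n m => ?_)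
  · rwa [tsum_eq_single 0 fun m hm => by simp [hm], quadCoeff, pow_zero, mul_one] at h
  · rw [mul_pow, norm_mul, norm_mul, norm_mul, norm_pow (q ^ n), norm_pow q]
    gcongr
    exact mul_le_of_le_one_left (norm_nonneg _)
      (pow_le_one₀ (by positivity) (pow_le_one₀ (norm_nonneg q) hq.le))

lemma multipliable_siteFactor (hq : ‖q‖ < 1) (t x : 𝕜) :
    Multipliable fun i : ℕ => siteFactor t (q ^ i * x) := by
  have hgeom := summable_geometric_of_lt_one (norm_nonneg q) hq
  have hgeom_sq := summable_geometric_of_lt_one (sq_nonneg ‖q‖)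
    (pow_lt_one₀ (norm_nonneg q) hq two_ne_zero)
  have hsum : Summable fun i : ℕ => ‖t * (q ^ i * x) + (q ^ i * x) ^ 2‖ := by
    refine ((hgeom.mul_left (‖t‖ * ‖x‖)).add (hgeom_sq.mul_left (‖x‖ ^ 2))).of_nonneg_of_le
      (fun i => norm_nonneg _) fun i => (norm_add_le _ _).trans_eq ?_
    simp only [norm_mul, norm_pow]
    ring
  simpa only [siteFactor, add_assoc] using multipliable_one_add_of_summable hsum

lemma quadSeries_eq_tprod (hq : ‖q‖ < 1) (t x : 𝕜) :
    quadSeries q t x = ∏' i : ℕ, siteFactor t (q ^ i * x) := by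
  have h := (multipliable_siteFactor hq t x).hasProd.tendsto_prod_nat.mul
    (tendsto_quadSeries_pow_mul hq t x)
  simp_rw [← quadSeries_eq_prod_mul hq t x, mul_one] at h
  exact tendsto_nhds_unique tendsto_const_nhds h

lemma multipliable_siteFactor_succ (hq : ‖q‖ < 1) (t z : 𝕜) :
    Multipliable fun i : ℕ => siteFactor t (q ^ (i + 1) * z) := by
  simpa only [pow_succ, mul_assoc] using multipliable_siteFactor hq t (q * z)

lemma multipliable_doubleFactor (hq : ‖q‖ < 1) (t z : 𝕜) : Multipliable (doubleFactor q t z) :=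
  (multipliable_siteFactor_succ hq t z).mul (multipliable_siteFactor hq t z⁻¹)

lemma tendsto_truncatedProduct (hq : ‖q‖ < 1) (t z : 𝕜) :
    Tendsto (truncatedProduct q t z) atTop (𝓝 (∏' i, doubleFactor q t z i)) := by
  have hz := multipliable_siteFactor_succ hq t z
  have htprod : ∏' i, doubleFactor q t z i
      = quadSeries q t z⁻¹ * ∏' i : ℕ, siteFactor t (q ^ (i + 1) * z) := by
    rw [quadSeries_eq_tprod hq, mul_comm]
    exact hz.tprod_mul (multipliable_siteFactor hq t z⁻¹)
  rw [htprod]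
  exact hz.hasProd.tendsto_prod_nat.const_mul _

/-- The factors of `G(q^(-N) z⁻¹)` with negative powers of `q` become those of the truncated product
because `siteFactor` is palindromic. -/
lemma truncatedProduct_eq (hq : ‖q‖ < 1) (hq0 : q ≠ 0) (t : 𝕜) {z : 𝕜} (hz : z ≠ 0) (N : ℕ) :
    truncatedProduct q t z N
      = q ^ (N * (N + 1)) * z ^ (2 * N) * quadSeries q t (q⁻¹ ^ N * z⁻¹) := by
  induction N with
  | zero => simp [truncatedProduct]
  | succ N ih =>
    have hshift : q * (q⁻¹ ^ (N + 1) * z⁻¹) = q⁻¹ ^ N * z⁻¹ := by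
      rw [pow_succ]
      field_simp
    have hinv : q⁻¹ ^ (N + 1) * z⁻¹ = (q ^ (N + 1) * z)⁻¹ := by rw [mul_inv, inv_pow]
    have hstep : truncatedProduct q t z (N + 1)
        = truncatedProduct q t z N * siteFactor t (q ^ (N + 1) * z) := by
      rw [truncatedProduct, Finset.prod_range_succ, ← mul_assoc, ← truncatedProduct]
    rw [hstep, ih, quadSeries_eq_siteFactor_mul hq t (q⁻¹ ^ (N + 1) * z⁻¹), hshift, hinv,
      ← sq_mul_siteFactor_inv t (mul_ne_zero (pow_ne_zero (N + 1) hq0) hz)]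
    ring

lemma hasSum_truncatedProduct_sub (hq : ‖q‖ < 1) (hq0 : q ≠ 0) (t : 𝕜) {z : 𝕜} (hz : z ≠ 0)
    (K : ℕ) :
    HasSum (fun m : ℕ => 2 * (oddCoeff q t m * thetaTerm q z (K - m)))
      (truncatedProduct q t z (K + 1) - truncatedProduct q t (-z) (K + 1)) := by
  rw [truncatedProduct_eq hq hq0 t hz, truncatedProduct_eq hq hq0 t (neg_ne_zero.2 hz),
    (even_two_mul (K + 1)).neg_pow, ← mul_sub, inv_neg, mul_neg]
  refine ((hasSum_odd_part (hasSum_quadSeries hq t _) (hasSum_quadSeries hq t _)).mul_left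
    _).congr_fun fun m => ?_
  rw [← truncated_odd_term hq0 t hz]
  ring

lemma theta_identity (hq : ‖q‖ < 1) (hq0 : q ≠ 0) (t : 𝕜) {z : 𝕜} (hz : z ≠ 0) {S : 𝕜}
    (hS : Tendsto (oddCoeff q t) atTop (𝓝 S)) :
    2 * (S * ∑' ℓ, thetaTerm q z ℓ)
      = ∏' i, doubleFactor q t z i - ∏' i, doubleFactor q t (-z) i := by
  have hprod := ((tendsto_truncatedProduct hq t z).sub (tendsto_truncatedProduct hq t (-z))).comp
    (tendsto_add_atTop_nat 1)
  have htheta := (tendsto_tsum_mul_sub hS (summable_norm_thetaTerm hq hz)).const_mul 2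
  refine tendsto_nhds_unique htheta (hprod.congr fun K => ?_)
  rw [← tsum_mul_left]
  exact (hasSum_truncatedProduct_sub hq hq0 t hz K).tsum_eq.symm

end Normed

/-! ### The sum over `Ho` -/

section Combinatorial

open Function Set

/-- The sequence with which the elements of `Ho` eventually agree, in the indexing `i = n + 1`. -/
def groundState (n : ℕ) : ℕ := if (n + 1) % 2 = 1 then 1 else 0

/-- The summand `q^A'(ω) t^B'(ω)` of `Sodd q t`. -/
noncomputable def weight (q t : ℝ) (ω : ℕ → ℕ) : ℝ := q ^ A'fun ω * t ^ B'fun ω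

/-- The factor that an entry `k` at index `n` contributes to `weight q t`. It is normalized to be
`1` for the ground state entry. -/
noncomputable def siteWeight (q t : ℝ) (n k : ℕ) : ℝ :=
  q ^ (if (n + 1) % 2 = 0 then ((n : ℤ) + 1) * k else ((n : ℤ) + 1) * (k - 1))
    * t ^ (2 * ((if (n + 1) % 2 = 0 ∧ 1 ≤ k then (1 : ℤ) else 0)
      - if (n + 1) % 2 = 1 ∧ k = 0 then (1 : ℤ) else 0))

/-- Sequences that agree with the ground state after index `n`, have no two consecutive zeros among
the indices `0, …, n`, and have an entry in `T` at index `n`. -/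
def level (n : ℕ) (T : Set ℕ) : Set (ℕ → ℕ) :=
  {ω | (∀ i < n, ¬(ω i = 0 ∧ ω (i + 1) = 0)) ∧ (∀ i > n, ω i = groundState i) ∧ ω n ∈ T}

variable {q t : ℝ}

lemma weight_groundState (q t : ℝ) : weight q t groundState = 1 := by
  have hA : A'fun groundState = 0 := finsum_eq_zero_of_forall_eq_zero fun n => by
    unfold groundState
    split_ifs <;> simp_all
  have hB : B'fun groundState = 0 := by
    unfold B'fun groundState
    rw [finsum_eq_zero_of_forall_eq_zero, finsum_eq_zero_of_forall_eq_zero] <;> grind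
  simp [weight, hA, hB]

lemma weight_pos (hq0 : 0 < q) (ht : 0 < t) (ω : ℕ → ℕ) : 0 < weight q t ω := by
  unfold weight
  positivity

lemma siteWeight_pos (hq0 : 0 < q) (ht : 0 < t) (n k : ℕ) : 0 < siteWeight q t n k := by
  unfold siteWeight
  positivity

lemma weight_update (hq : q ≠ 0) (ht : t ≠ 0) {n : ℕ} {ω : ℕ → ℕ}
    (hω : ∀ i ≥ n, ω i = groundState i) (k : ℕ) :
    weight q t (update ω n k) = weight q t ω * siteWeight q t n k := by
  have hfin : {i | ω i ≠ groundState i}.Finite :=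
    (finite_lt_nat n).subset fun i hi => lt_of_not_ge fun h => hi (hω i h)
  have hn := hω n le_rfl
  have hA := finsum_update (fun (i : ℕ) (k : ℕ) => if (i + 1) % 2 = 0 then ((i : ℤ) + 1) * k
    else ((i : ℤ) + 1) * (k - 1)) (fun i => by grind [groundState]) hfin hn k
  have hB_pos := finsum_update (fun i k => if (i + 1) % 2 = 0 ∧ 1 ≤ k then (1 : ℤ) else 0)
    (fun i => by grind [groundState]) hfin hn k
  have hB_zero := finsum_update (fun i k => if (i + 1) % 2 = 1 ∧ k = 0 then (1 : ℤ) else 0)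
    (fun i => by grind [groundState]) hfin hn k
  unfold weight A'fun B'fun siteWeight
  rw [hA, hB_pos, hB_zero, zpow_add₀ hq, mul_mul_mul_comm, ← zpow_add₀ ht]
  ring_nf

lemma hasSum_weight_of_mem_iff (hq0 : 0 < q) (ht : 0 < t) {n : ℕ} {s s' : Set (ℕ → ℕ)}
    {T : Set ℕ} (hs : ∀ ω ∈ s, ∀ i ≥ n, ω i = groundState i)
    (hs' : ∀ ω, ω ∈ s' ↔ update ω n (groundState n) ∈ s ∧ ω n ∈ T) {a b : ℝ}
    (ha : HasSum (fun ω : s => weight q t ω) a) (hb : HasSum (fun k : T => siteWeight q t n k) b) :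
    HasSum (fun ω : s' => weight q t ω) (a * b) := by
  have hupdate (ω : s) : update ω.1 n (groundState n) = ω := by
    rw [← hs ω ω.2 n le_rfl, update_eq_self]
  let e : s × T ≃ s' :=
    { toFun p := ⟨update p.1 n p.2, (hs' _).2 ⟨by rw [update_idem, hupdate]; exact p.1.2, by
        rw [update_self]; exact p.2.2⟩⟩
      invFun ω := (⟨update ω n (groundState n), ((hs' _).1 ω.2).1⟩, ⟨ω.1 n, ((hs' _).1 ω.2).2⟩)
      left_inv p := Prod.ext (Subtype.ext <| by simp only [update_idem, hupdate])
        (Subtype.ext <| by simp only [update_self])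
      right_inv ω := Subtype.ext <| by simp only [update_idem, update_eq_self] }
  have hmul := hasSum_mul_of_nonneg ha hb (fun ω => (weight_pos hq0 ht ω).le)
    fun k => (siteWeight_pos hq0 ht n k).le
  have hw (p : s × T) : weight q t (e p) = weight q t p.1 * siteWeight q t n p.2 :=
    weight_update hq0.ne' ht.ne' (hs p.1 p.1.2) p.2
  exact e.hasSum_iff.1 (hmul.congr_fun hw)

lemma hasSum_level_zero (hq0 : 0 < q) (ht : 0 < t) {T : Set ℕ} {b : ℝ}
    (hb : HasSum (fun k : T => siteWeight q t 0 k) b) :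
    HasSum (fun ω : level 0 T => weight q t ω) b := by
  have hground : HasSum (fun ω : ({groundState} : Set (ℕ → ℕ)) => weight q t ω) 1 := by
    simpa [weight_groundState] using hasSum_unique fun ω : ({groundState} : Set (ℕ → ℕ)) =>
      weight q t ω
  rw [← one_mul b]
  refine hasSum_weight_of_mem_iff hq0 ht (by simp) (fun ω => ?_) hground hb
  simp [level, update_eq_iff, Nat.pos_iff_ne_zero]

/-- `hT` says that an entry of `T` may precede an entry of `T'`, and that no other entry may. -/
lemma hasSum_level_succ (hq0 : 0 < q) (ht : 0 < t) {n : ℕ} {T T' : Set ℕ}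
    (hT : ∀ j, ∀ k ∈ T', j ∈ T ↔ ¬(j = 0 ∧ k = 0)) {a b : ℝ}
    (ha : HasSum (fun ω : level n T => weight q t ω) a)
    (hb : HasSum (fun k : T' => siteWeight q t (n + 1) k) b) :
    HasSum (fun ω : level (n + 1) T' => weight q t ω) (a * b) := by
  refine hasSum_weight_of_mem_iff hq0 ht (fun ω hω i hi => hω.2.1 i hi) (fun ω => ?_) ha hb
  have hpre : ∀ i ≤ n, update ω (n + 1) (groundState (n + 1)) i = ω i := fun i hi =>
    update_of_ne (by omega) _ _
  constructor
  · rintro ⟨hzeros, hground, hk⟩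
    refine ⟨⟨fun i hi => ?_, fun i hi => ?_, ?_⟩, hk⟩
    · rw [hpre i (by omega), hpre (i + 1) (by omega)]
      exact hzeros i (by omega)
    · rcases eq_or_ne i (n + 1) with rfl | hne
      · rw [update_self]
      · rw [update_of_ne hne, hground i (by omega)]
    · rw [hpre n le_rfl, hT _ _ hk]
      exact hzeros n (by omega)
  · rintro ⟨⟨hzeros, hground, hj⟩, hk⟩
    refine ⟨fun i hi => ?_, fun i hi => ?_, hk⟩
    · rcases eq_or_ne i n with rfl | hne
      · rwa [hpre i le_rfl, hT _ _ hk] at hj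
      · have := hzeros i (by omega)
        rwa [hpre i (by omega), hpre (i + 1) (by omega)] at this
    · rw [← hground i (by omega), update_of_ne (by omega)]

lemma hasSum_level_succ_zero (hq0 : 0 < q) (ht : 0 < t) {n : ℕ} {b : ℝ}
    (hb : HasSum (fun ω : level n (Ioi 0) => weight q t ω) b) :
    HasSum (fun ω : level (n + 1) {0} => weight q t ω) (b * siteWeight q t (n + 1) 0) :=
  hasSum_level_succ hq0 ht (by simp [Nat.pos_iff_ne_zero]) hb
    (hasSum_unique fun k : ({0} : Set ℕ) => siteWeight q t (n + 1) k)

lemma hasSum_level_succ_pos (hq0 : 0 < q) (ht : 0 < t) {n : ℕ} {a b s : ℝ}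
    (ha : HasSum (fun ω : level n {0} => weight q t ω) a)
    (hb : HasSum (fun ω : level n (Ioi 0) => weight q t ω) b)
    (hs : HasSum (fun k : Ioi 0 => siteWeight q t (n + 1) k) s) :
    HasSum (fun ω : level (n + 1) (Ioi 0) => weight q t ω) ((a + b) * s) := by
  have hdisj : Disjoint (level n {0}) (level n (Ioi 0)) := disjoint_left.2 fun ω h₀ h₁ =>
    (ne_of_gt h₁.2.2) h₀.2.2
  have hunion : level n {0} ∪ level n (Ioi 0) = level n univ := by
    ext ω
    have := Nat.eq_zero_or_pos (ω n)
    simp only [level, mem_union, mem_ofPred_eq, mem_singleton_iff, mem_Ioi, mem_univ]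
    tauto
  have hab : HasSum (fun ω : level n univ => weight q t ω) (a + b) :=
    hunion ▸ HasSum.add_disjoint (f := weight q t) hdisj ha hb
  exact hasSum_level_succ hq0 ht (by simp +contextual [ne_of_gt]) hab hs

lemma siteWeight_even (q t : ℝ) (k j : ℕ) : siteWeight q t (2 * k) j
    = q ^ (((2 * k + 1 : ℕ) : ℤ) * (j - 1)) * if j = 0 then (t ^ 2)⁻¹ else 1 := by
  have hodd : (2 * k + 1) % 2 = 1 := by omega
  rcases Nat.eq_zero_or_pos j with rfl | hj
  · simp [siteWeight, hodd, zpow_neg]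
  · simp [siteWeight, hodd, hj.ne']

lemma siteWeight_odd (q t : ℝ) (k j : ℕ) : siteWeight q t (2 * k + 1) j
    = q ^ ((2 * k + 2) * j) * if j = 0 then 1 else t ^ 2 := by
  have heven : (2 * k + 1 + 1) % 2 = 0 := by omega
  have hexp : ((2 * k + 1 : ℕ) + 1 : ℤ) * j = ((2 * k + 2) * j : ℕ) := by push_cast; ring
  rw [siteWeight, if_pos heven, hexp, zpow_natCast]
  rcases Nat.eq_zero_or_pos j with rfl | hj
  · simp [heven]
  · simp [heven, hj.ne', Nat.one_le_iff_ne_zero]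

lemma hasSum_siteWeight_even (hq0 : 0 < q) (hq1 : q < 1) (t : ℝ) (k : ℕ) :
    HasSum (fun j : Ioi 0 => siteWeight q t (2 * k) j) (1 - q ^ (2 * k + 1))⁻¹ := by
  refine hasSum_Ioi_zero_iff.2 ((hasSum_geometric_of_lt_one (r := q ^ (2 * k + 1)) (by positivity)
    (pow_lt_one₀ hq0.le hq1 (by omega))).congr_fun fun j => ?_)
  rw [siteWeight_even, if_neg (Nat.succ_ne_zero j), mul_one, Nat.cast_succ j, add_sub_cancel_right,
    zpow_mul, zpow_natCast, zpow_natCast]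

lemma hasSum_siteWeight_odd (hq0 : 0 < q) (hq1 : q < 1) (t : ℝ) (k : ℕ) :
    HasSum (fun j : Ioi 0 => siteWeight q t (2 * k + 1) j)
      (t ^ 2 * q ^ (2 * k + 2) * (1 - q ^ (2 * k + 2))⁻¹) := by
  refine hasSum_Ioi_zero_iff.2 (((hasSum_geometric_of_lt_one (r := q ^ (2 * k + 2)) (by positivity)
    (pow_lt_one₀ hq0.le hq1 (by omega))).mul_left (t ^ 2 * q ^ (2 * k + 2))).congr_fun fun j => ?_)
  rw [siteWeight_odd, if_neg (Nat.succ_ne_zero j), pow_mul, pow_succ _ j]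
  ring

lemma siteWeight_even_zero (q t : ℝ) (k : ℕ) :
    siteWeight q t (2 * k) 0 = (q ^ (2 * k + 1))⁻¹ * (t ^ 2)⁻¹ := by
  rw [siteWeight_even, Nat.cast_zero, zero_sub, mul_neg_one, zpow_neg, zpow_natCast, if_pos rfl]

lemma transfer_odd_pos (hq : ‖q‖ < 1) (hq0 : q ≠ 0) (ht : t ≠ 0) (k : ℕ) :
    (q⁻¹ ^ (k ^ 2 + 1) * quadCoeff q t (2 * k) / t ^ 2 + oddCoeff q t k / t)
        * (t ^ 2 * q ^ (2 * k + 2) * (1 - q ^ (2 * k + 2))⁻¹)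
      = q * q⁻¹ ^ k ^ 2 * quadCoeff q t (2 * k + 2) := by
  have hsub := one_sub_pow_ne_zero hq (n := 2 * k + 2) (by omega)
  rw [← mul_assoc, mul_inv_eq_iff_eq_mul₀ hsub, mul_assoc, mul_comm (quadCoeff _ _ _),
    quadCoeff_add_two hq, oddCoeff, inv_pow, inv_pow]
  field_simp
  ring

lemma transfer_even_zero (hq0 : q ≠ 0) (k : ℕ) :
    q * q⁻¹ ^ k ^ 2 * quadCoeff q t (2 * k + 2) * ((q ^ (2 * k + 3))⁻¹ * (t ^ 2)⁻¹)
      = q⁻¹ ^ ((k + 1) ^ 2 + 1) * quadCoeff q t (2 * k + 2) / t ^ 2 := by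
  have hexp : (k + 1) ^ 2 + 1 = k ^ 2 + (2 * k + 2) := by ring
  have hsucc : q ^ (2 * k + 3) = q ^ (2 * k + 2) * q := pow_succ _ _
  rw [hexp, pow_add _ (k ^ 2), hsucc, inv_pow, inv_pow]
  field_simp

lemma transfer_even_pos (hq : ‖q‖ < 1) (hq0 : q ≠ 0) (ht : t ≠ 0) (k : ℕ) :
    (oddCoeff q t k / t + q * q⁻¹ ^ k ^ 2 * quadCoeff q t (2 * k + 2))
        * (1 - q ^ (2 * k + 3))⁻¹ = oddCoeff q t (k + 1) / t := by
  have hsub := one_sub_pow_ne_zero hq (n := 2 * k + 3) (by omega)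
  have hexp : (k + 1) ^ 2 = k ^ 2 + (2 * k + 1) := by ring
  have hrec := quadCoeff_add_two hq t (2 * k + 1)
  rw [mul_inv_eq_iff_eq_mul₀ hsub, oddCoeff, oddCoeff, hexp, pow_add, inv_pow, inv_pow]
  simp only [show 2 * (k + 1) + 1 = 2 * k + 1 + 2 by ring, show 2 * k + 3 = 2 * k + 1 + 2 by ring]
  field_simp
  linear_combination -hrec

/-- The transfer recursion between consecutive levels is the recurrence of `quadCoeff`. -/
lemma hasSum_level_even (hq0 : 0 < q) (hq1 : q < 1) (ht : 0 < t) (k : ℕ) :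
    HasSum (fun ω : level (2 * k) {0} => weight q t ω)
        (q⁻¹ ^ (k ^ 2 + 1) * quadCoeff q t (2 * k) / t ^ 2) ∧
      HasSum (fun ω : level (2 * k) (Ioi 0) => weight q t ω) (oddCoeff q t k / t) := by
  have hq : ‖q‖ < 1 := by rwa [Real.norm_of_nonneg hq0.le]
  induction k with
  | zero =>
    constructor
    · refine hasSum_level_zero hq0 ht ?_
      have h := hasSum_unique fun k : ({0} : Set ℕ) => siteWeight q t 0 k
      have hzero := siteWeight_even_zero q t 0
      simpa [quadCoeff, hzero, div_eq_mul_inv] using h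
    · have h := hasSum_level_zero hq0 ht (hasSum_siteWeight_even hq0 hq1 t 0)
      simpa [oddCoeff, quadCoeff, ht.ne', div_right_comm] using h
  | succ k ih =>
    obtain ⟨hzero, hpos⟩ := ih
    have hodd_zero := hasSum_level_succ_zero hq0 ht hpos
    have hodd_pos := hasSum_level_succ_pos hq0 ht hzero hpos (hasSum_siteWeight_odd hq0 hq1 t k)
    rw [siteWeight_odd, mul_zero, pow_zero, if_pos rfl, mul_one, mul_one] at hodd_zero
    rw [transfer_odd_pos hq hq0.ne' ht.ne'] at hodd_pos
    have heven_zero := hasSum_level_succ_zero hq0 ht hodd_pos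
    have heven_pos := hasSum_level_succ_pos hq0 ht hodd_zero hodd_pos
      (hasSum_siteWeight_even hq0 hq1 t (k + 1))
    rw [← mul_add_one 2 k, siteWeight_even_zero] at heven_zero
    exact ⟨transfer_even_zero hq0.ne' k ▸ heven_zero,
      transfer_even_pos hq hq0.ne' ht.ne' k ▸ heven_pos⟩

lemma monotone_level_even : Monotone fun k => level (2 * k) (Ioi 0) := by
  refine monotone_nat_of_le_succ fun k ω ⟨hzeros, hground, hpos⟩ =>
    ⟨fun i hi => ?_, fun i hi => hground i (by omega), ?_⟩
  · rcases lt_trichotomy i (2 * k) with h | rfl | h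
    · exact hzeros i h
    · exact fun h => hpos.ne' h.1
    · grind [groundState]
  · grind [groundState]

lemma Ho_eq_iUnion_level : Ho = ⋃ k, level (2 * k) (Ioi 0) := by
  ext ω
  rw [mem_iUnion]
  constructor
  · rintro ⟨hzeros, N, hground⟩
    refine ⟨N, fun i _ => hzeros i, fun i hi => hground i (by omega), ?_⟩
    grind
  · rintro ⟨k, hzeros, hground, hpos⟩
    refine ⟨fun i => ?_, 2 * k + 1, fun i hi => hground i (by omega)⟩
    rcases lt_trichotomy i (2 * k) with h | rfl | h
    · exact hzeros i h
    · exact fun h => hpos.ne' h.1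
    · grind [groundState]

section Limit

variable (hq0 : 0 < q) (hq1 : q < 1) (ht : 0 < t)

include hq0 hq1 ht

lemma quadCoeff_pos (n : ℕ) : 0 < quadCoeff q t n := by
  have hsub {n : ℕ} (hn : n ≠ 0) : 0 < 1 - q ^ n := sub_pos.2 (pow_lt_one₀ hq0.le hq1 hn)
  induction n using Nat.twoStepInduction with
  | zero => exact one_pos
  | one => exact div_pos ht (sub_pos.2 hq1)
  | more n ih₀ ih₁ => exact div_pos (by positivity) (hsub (by omega))

/-- Up to the factor `q`, `oddCoeff q t k` is one of the positive terms of the series for the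
convergent sequence `truncatedProduct q t 1`. -/
lemma bddAbove_range_oddCoeff : BddAbove (range (oddCoeff q t)) := by
  have hq : ‖q‖ < 1 := by rwa [Real.norm_of_nonneg hq0.le]
  obtain ⟨C, hC⟩ := (tendsto_truncatedProduct hq t 1).bddAbove_range
  refine ⟨C / q, ?_⟩
  rintro _ ⟨k, rfl⟩
  have hterm := truncated_odd_term hq0.ne' t one_ne_zero k k
  have htheta : thetaTerm q 1 ((k : ℤ) - k) = q := by simp [thetaTerm]
  have hsum := (hasSum_quadSeries hq t (q⁻¹ ^ (k + 1) * 1⁻¹)).mul_left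
    (q ^ ((k + 1) * (k + 1 + 1)) * 1 ^ (2 * (k + 1)))
  rw [← truncatedProduct_eq hq hq0.ne' t one_ne_zero] at hsum
  have hle := le_hasSum hsum (2 * k + 1) fun n _ => by
    have := quadCoeff_pos hq0 hq1 ht n
    positivity
  rw [hterm, htheta] at hle
  exact (le_div_iff₀ hq0).2 (hle.trans (hC ⟨k + 1, rfl⟩))

lemma tendsto_oddCoeff : Tendsto (oddCoeff q t) atTop (𝓝 (t * Sodd q t)) := by
  have hbdd : BddAbove (range fun k => oddCoeff q t k / t) := by
    obtain ⟨C, hC⟩ := bddAbove_range_oddCoeff hq0 hq1 ht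
    refine ⟨C / t, ?_⟩
    rintro _ ⟨k, rfl⟩
    exact div_le_div_of_nonneg_right (hC ⟨k, rfl⟩) ht.le
  have h := tendsto_tsum_iUnion_of_monotone (fun ω => (weight_pos hq0 ht ω).le) monotone_level_even
    (fun k => (hasSum_level_even hq0 hq1 ht k).2) hbdd
  rw [← Ho_eq_iUnion_level] at h
  exact (h.const_mul t).congr fun k => mul_div_cancel₀ _ ht.ne'

end Limit

end Combinatorial

theorem statement8_general {𝕜 : Type*} [RCLike 𝕜] (q t : ℝ) (z : 𝕜) (hq0 : 0 < q) (hq1 : q < 1)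
    (ht : 0 < t) (hz : z ≠ 0) :
    Summable (fun ℓ => thetaTerm (q : 𝕜) z ℓ) ∧
      Multipliable (fun i => doubleFactor (q : 𝕜) t z i) ∧
      Multipliable (fun i => doubleFactor (q : 𝕜) t (-z) i) ∧
      2 * t * Sodd q t * ∑' ℓ, thetaTerm (q : 𝕜) z ℓ
        = ∏' i, doubleFactor (q : 𝕜) t z i - ∏' i, doubleFactor (q : 𝕜) t (-z) i := by
  have hq : ‖(q : 𝕜)‖ < 1 := by rwa [RCLike.norm_ofReal, abs_of_pos hq0]
  have hq0' : (q : 𝕜) ≠ 0 := RCLike.ofReal_ne_zero.2 hq0.ne'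
  have hlim : Tendsto (oddCoeff (q : 𝕜) t) atTop (𝓝 ((t * Sodd q t : ℝ) : 𝕜)) :=
    ((RCLike.continuous_ofReal.tendsto _).comp (tendsto_oddCoeff hq0 hq1 ht)).congr
      (map_oddCoeff (algebraMap ℝ 𝕜) q t)
  refine ⟨(summable_norm_thetaTerm hq hz).of_norm, multipliable_doubleFactor hq t z,
    multipliable_doubleFactor hq t (-z), ?_⟩
  rw [← theta_identity hq hq0' t hz hlim]
  push_cast
  ring

theorem statement8 (q z : ℝ) (hq0 : 0 < q) (hq1 : q < 1) (hz : 0 < z) :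
    Summable (fun ℓ : ℤ => q ^ ((ℓ + 1) ^ 2) * z ^ (2 * ℓ + 1)) ∧
    Multipliable (fun i : ℕ => ((1 + q ^ (i + 1) * z) * (1 + q ^ i * z⁻¹)) ^ 2) ∧
    Multipliable (fun i : ℕ => ((1 - q ^ (i + 1) * z) * (1 - q ^ i * z⁻¹)) ^ 2) ∧
    4 * Sodd q 2 * (∑' ℓ : ℤ, q ^ ((ℓ + 1) ^ 2) * z ^ (2 * ℓ + 1)) =
      (∏' i : ℕ, ((1 + q ^ (i + 1) * z) * (1 + q ^ i * z⁻¹)) ^ 2) -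
      (∏' i : ℕ, ((1 - q ^ (i + 1) * z) * (1 - q ^ i * z⁻¹)) ^ 2) := by
  simpa [thetaTerm, doubleFactor_two, ← sub_eq_add_neg, show (2 : ℝ) * 2 = 4 by norm_num] using
    statement8_general q 2 z hq0 hq1 two_pos hz.ne'
end
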